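/- arXiv:1303.4040 — 5 statements merged into one kernel-verified Lean document; each statement's English description precedes it below -/
import Mathlib

section
/- Let f₁, f₂ ∈ C_c^∞((0,∞)) be complex-valued. Define the Laplace convolution F(t) = ∫₀^t conj(f₁(s)) f₂(t-s) ds for t > 0, the function Ω(x) = F(e^x) for x ∈ ℝ (which belongs to C_c^∞(ℝ)), and g_j(ξ) = Γ(1/2 + iξ) · (M f_j)(ξ) for j = 1, 2, where (M f)(ξ) = (2π)^{-1/2} ∫₀^∞ f(t) t^{-1/2 - iξ} dt is the Mellin transform and Γ is the complex Gamma function. Then for every ξ ∈ ℝ, √(2π) · Γ(1 + iξ) · (Φ Ω)(ξ) = ∫_ℝ conj(g₁(η - ξ)) g₂(η) dη, where (Φ Ω)(ξ) = (2π)^{-1/2} ∫_ℝ Ω(x) e^{-ixξ} dx is the Fourier transform. -/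
open MeasureTheory
open scoped ComplexOrder

noncomputable section

/-- Complex-valued test functions: smooth, compactly supported, support inside `(0,∞)`. -/
def IsTestFun (f : ℝ → ℂ) : Prop :=
  ContDiff ℝ (⊤ : ℕ∞) f ∧ HasCompactSupport f ∧ tsupport f ⊆ Set.Ioi 0

/-- The Mellin transform `(M f)(ξ) = (2π)^{-1/2} ∫₀^∞ f(t) t^{-1/2 - iξ} dt`. -/
def mellinT (f : ℝ → ℂ) (ξ : ℝ) : ℂ :=
  (Real.sqrt (2 * Real.pi) : ℂ)⁻¹ *
    ∫ t in Set.Ioi (0:ℝ), f t * (t : ℂ) ^ ((-(1/2) : ℂ) - Complex.I * ξ)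

/-- The Laplace convolution `F(t) = ∫₀^t conj(f₁(s)) f₂(t-s) ds`. -/
def laplaceConv (f₁ f₂ : ℝ → ℂ) (t : ℝ) : ℂ :=
  ∫ s in (0:ℝ)..t, (starRingEnd ℂ) (f₁ s) * f₂ (t - s)

/-!
Inserting `e^{-yp}` as the inverse Mellin transform of `Γ(w) y^{-w}` into the Gamma integral for
`(x + y)^{-z}` gives the Mellin–Barnes formula
`Γ(z) (x + y)^{-z} = (2π)⁻¹ ∫ Γ(z - w) Γ(w) x^{-(z - w)} y^{-w} dη`, where `w = σ + iη` and
`0 < σ < Re z`. Its right side separates `x` from `y`.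
By the substitutions `t = eˣ` and `t = s + u`, `√(2π) (ΦΩ)(ξ)` is the integral of
`conj (f₁ s) f₂ u (s + u)^{-1 - iξ}` over the open quadrant, so the formula with `z = 1 + iξ` and
`σ = 1/2`, followed by Fubini, expresses it through the Mellin transforms of `f₁` and `f₂` on the
critical line. Fubini applies because `Γ` is integrable on vertical lines and, for real `η`, the
factors `s^{iη}` and `u^{-iη}` are unimodular.
-/

section

open Set Complex

variable {E : Type*} [NormedAddCommGroup E]

theorem continuousOn_Gamma_re_pos : ContinuousOn Gamma {s : ℂ | 0 < s.re} := fun s hs =>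
  (differentiableAt_Gamma s fun n h => by
    have hre : s.re = -n := by simp [h]
    have : (0 : ℝ) ≤ n := n.cast_nonneg
    have : 0 < s.re := hs
    linarith).continuousAt.continuousWithinAt

theorem norm_Gamma_le_Gamma_re {s : ℂ} (hs : 0 < s.re) : ‖Gamma s‖ ≤ Real.Gamma s.re := by
  rw [Gamma_eq_integral hs, Real.Gamma_eq_integral hs, GammaIntegral]
  refine (norm_integral_le_integral_norm _).trans_eq
    (setIntegral_congr_fun measurableSet_Ioi fun x hx => ?_)
  rw [norm_mul, norm_real, Real.norm_of_nonneg (Real.exp_nonneg _),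
    norm_cpow_eq_rpow_re_of_pos hx, sub_re, one_re]

theorem norm_Gamma_le_div_sq {s : ℂ} (hs : 0 < s.re) :
    ‖Gamma s‖ ≤ Real.Gamma (s.re + 2) / ‖s‖ ^ 2 := by
  have hs₀ : s ≠ 0 := by rintro rfl; simp at hs
  have hs₁ : s + 1 ≠ 0 := fun h => by
    have := congrArg re h
    simp only [add_re, one_re, zero_re] at this
    linarith
  have hle : ‖s‖ ≤ ‖s + 1‖ := by
    rw [norm_def, norm_def]
    refine Real.sqrt_le_sqrt ?_
    simp only [normSq_apply, add_re, add_im, one_re, one_im, add_zero]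
    nlinarith
  rw [le_div_iff₀ (by positivity)]
  calc ‖Gamma s‖ * ‖s‖ ^ 2 ≤ ‖s + 1‖ * (‖s‖ * ‖Gamma s‖) := by
        rw [sq, ← mul_assoc, mul_comm, mul_comm ‖Gamma s‖]
        gcongr
    _ = ‖Gamma (s + 1 + 1)‖ := by
        rw [Gamma_add_one _ hs₁, Gamma_add_one _ hs₀, norm_mul, norm_mul]
    _ ≤ Real.Gamma (s + 1 + 1).re := norm_Gamma_le_Gamma_re (by simp; linarith)
    _ = Real.Gamma (s.re + 2) := by
        congr 1
        simp only [add_re, one_re]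
        ring

theorem verticalIntegrable_Gamma {σ : ℝ} (hσ : 0 < σ) : VerticalIntegrable Gamma σ := by
  have hbound : Integrable fun η : ℝ => Real.Gamma (σ + 2) / (σ ^ 2 + η ^ 2) := by
    convert (integrable_inv_one_add_sq.comp_div hσ.ne').const_mul (Real.Gamma (σ + 2) / σ ^ 2)
      using 2 with η
    field_simp
  refine hbound.mono' ?_ (.of_forall fun η => ?_)
  · exact (continuousOn_Gamma_re_pos.comp_continuous (by fun_prop)
      fun η => by simpa using hσ).aestronglyMeasurable
  · convert norm_Gamma_le_div_sq (s := σ + η * I) (by simpa using hσ) using 2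
    · simp
    · rw [Complex.sq_norm, normSq_add_mul_I]

theorem integrable_Gamma_sub_mul_Gamma_add {a : ℂ} {σ : ℝ} (ha : 0 < a.re) (hσ : 0 < σ) :
    Integrable fun η : ℝ => Gamma (a - η * I) * Gamma (σ + η * I) := by
  refine Integrable.bdd_mul (c := Real.Gamma a.re) (verticalIntegrable_Gamma hσ) ?_
    (.of_forall fun η => ?_)
  · exact (continuousOn_Gamma_re_pos.comp_continuous (by fun_prop)
      fun η => by simpa using ha).aestronglyMeasurable
  · simpa using norm_Gamma_le_Gamma_re (s := a - η * I) (by simpa using ha)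

theorem hasMellin_exp_neg_mul {x : ℝ} (hx : 0 < x) {s : ℂ} (hs : 0 < s.re) :
    HasMellin (fun t => (Real.exp (-(x * t)) : ℂ)) s ((x : ℂ) ^ (-s) * Gamma s) := by
  constructor
  · refine (MellinConvergent.comp_mul_left (f := fun t => (Real.exp (-t) : ℂ)) hx).mpr ?_
    simpa only [MellinConvergent, smul_eq_mul, mul_comm] using! GammaIntegral_convergent hs
  · rw [mellin_comp_mul_left (fun t => (Real.exp (-t) : ℂ)) s hx, smul_eq_mul,
      Gamma_eq_integral hs, GammaIntegral_eq_mellin]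

section Parseval

variable [NormedSpace ℂ E]

theorem integrable_mellin_kernel_smul {g : ℝ → ℂ} {H : ℝ → E} {a : ℂ}
    (hg : MellinConvergent g a) (hH : Integrable H) :
    Integrable (fun z : ℝ × ℝ => ((z.1 : ℂ) ^ (a - z.2 * I - 1) • g z.1) • H z.2)
      ((volume.restrict (Ioi 0)).prod volume) := by
  have hpos : ∀ᵐ z ∂(volume.restrict (Ioi (0 : ℝ))).prod (volume : Measure ℝ), 0 < z.1 :=
    Measure.quasiMeasurePreserving_fst.ae (ae_restrict_mem measurableSet_Ioi)
  have hprod := Integrable.smul_prod (R := ℂ) hg hH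
  refine (hprod.bdd_smul (φ := fun z : ℝ × ℝ => (z.1 : ℂ) ^ (-(z.2 * I))) 1
    (Measurable.aestronglyMeasurable (by fun_prop)) ?_).congr ?_
  · filter_upwards [hpos] with z hz
    simp [norm_cpow_eq_rpow_re_of_pos hz]
  · filter_upwards [hpos] with z hz
    simp only [Pi.smul_apply', smul_smul, smul_eq_mul]
    rw [← mul_assoc, ← cpow_add _ _ (ofReal_ne_zero.mpr hz.ne')]
    ring_nf

variable [CompleteSpace E]

theorem mellin_smul_eq_integral_mellin_smul_mellin {g : ℝ → ℂ} {h : ℝ → E} {a : ℂ} {σ : ℝ}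
    (hg : MellinConvergent g a) (hh : MellinConvergent h σ)
    (hhv : VerticalIntegrable (mellin h) σ) (hhc : ContinuousOn h (Ioi 0)) :
    mellin (fun p => g p • h p) (a + σ) =
      (1 / (2 * Real.pi)) • ∫ η : ℝ, mellin g (a - η * I) • mellin h (σ + η * I) := by
  have hinv : ∀ p ∈ Ioi (0 : ℝ), (p : ℂ) ^ (a + σ - 1) • (g p • h p) = (1 / (2 * Real.pi)) •
      ∫ η : ℝ, ((p : ℂ) ^ (a - η * I - 1) • g p) • mellin h (σ + η * I) := by
    intro p hp
    rw [← mellinInv_mellin_eq σ h hp hh hhv (hhc.continuousAt (Ioi_mem_nhds hp)), mellinInv,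
      smul_comm (g p), smul_comm _ (1 / (2 * Real.pi)), smul_smul, ← integral_smul]
    congr with η
    rw [smul_smul, mul_right_comm, ← cpow_add _ _ (ofReal_ne_zero.mpr (ne_of_gt hp)), smul_eq_mul]
    ring_nf
  rw [mellin, setIntegral_congr_fun measurableSet_Ioi hinv, integral_smul,
    integral_integral_swap (integrable_mellin_kernel_smul hg hhv)]
  simp only [integral_smul_const, mellin]

end Parseval

theorem Gamma_mul_add_cpow_neg_eq_integral {x y : ℝ} (hx : 0 < x) (hy : 0 < y) {a : ℂ} {σ : ℝ}
    (ha : 0 < a.re) (hσ : 0 < σ) :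
    Gamma (a + σ) * (x + y : ℂ) ^ (-(a + σ)) = (2 * Real.pi : ℂ)⁻¹ *
      ∫ η : ℝ, Gamma (a - η * I) * Gamma (σ + η * I) *
        ((x : ℂ) ^ (-(a - η * I)) * (y : ℂ) ^ (-(σ + η * I))) := by
  have hx_mellin (η : ℝ) := hasMellin_exp_neg_mul hx (s := a - η * I) (by simpa using ha)
  have hy_mellin (η : ℝ) := hasMellin_exp_neg_mul hy (s := σ + η * I) (by simpa using hσ)
  have hvert : VerticalIntegrable (mellin fun t => (Real.exp (-(y * t)) : ℂ)) σ := by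
    simp only [VerticalIntegrable, (hy_mellin _).2]
    refine (verticalIntegrable_Gamma hσ).bdd_mul (c := y ^ (-σ))
      (Measurable.aestronglyMeasurable (by fun_prop)) (.of_forall fun η => ?_)
    simp [norm_cpow_eq_rpow_re_of_pos hy]
  have hparseval := mellin_smul_eq_integral_mellin_smul_mellin
    (hasMellin_exp_neg_mul hx ha).1 (hasMellin_exp_neg_mul hy (by simpa using hσ)).1 hvert
    (by fun_prop)
  have hmul (t : ℝ) : (Real.exp (-(x * t)) : ℂ) • (Real.exp (-(y * t)) : ℂ) =
      (Real.exp (-((x + y) * t)) : ℂ) := by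
    rw [smul_eq_mul, ← ofReal_mul, ← Real.exp_add]
    ring_nf
  simp only [hmul, (hx_mellin _).2, (hy_mellin _).2,
    (hasMellin_exp_neg_mul (add_pos hx hy) (s := a + σ) (by simp; linarith)).2] at hparseval
  rw [← ofReal_add, mul_comm, hparseval, real_smul]
  congr 1
  · simp
  · congr with η
    rw [smul_eq_mul]
    ring

theorem setIntegral_Ioi_prod_Ioi_eq_integral_intervalIntegral [NormedSpace ℝ E] {H : ℝ × ℝ → E}
    (hH : IntegrableOn H (Ioi 0 ×ˢ Ioi 0)) :
    ∫ z in Ioi 0 ×ˢ Ioi 0, H z = ∫ t in Ioi (0 : ℝ), ∫ s in (0 : ℝ)..t, H (s, t - s) := by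
  have hquad : MeasurableSet (Ioi (0 : ℝ) ×ˢ Ioi (0 : ℝ)) :=
    measurableSet_Ioi.prod measurableSet_Ioi
  set G : ℝ × ℝ → E := indicator (Ioi 0 ×ˢ Ioi 0) H with hG
  have hG_int : Integrable G := hH.integrable_indicator hquad
  have hshear : MeasurePreserving (fun z : ℝ × ℝ => (z.2, z.1 - z.2)) :=
    measurePreserving_prod_sub_swap volume volume
  have hinner (t : ℝ) : ∫ s, G (s, t - s) =
      indicator (Ioi 0) (fun t => ∫ s in (0 : ℝ)..t, H (s, t - s)) t := by
    have hslice : (fun s => G (s, t - s)) = indicator (Ioo 0 t) fun s => H (s, t - s) := by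
      ext s
      simp [hG, indicator_apply]
    rw [hslice, integral_indicator measurableSet_Ioo]
    rcases lt_or_ge 0 t with ht | ht
    · rw [indicator_of_mem (mem_Ioi.mpr ht), intervalIntegral.integral_of_le ht.le,
        integral_Ioc_eq_integral_Ioo]
    · rw [indicator_of_notMem (notMem_Ioi.mpr ht), Ioo_eq_empty ht.not_gt, setIntegral_empty]
  calc ∫ z in Ioi 0 ×ˢ Ioi 0, H z = ∫ z, G z := (integral_indicator hquad).symm
    _ = ∫ z : ℝ × ℝ, G (z.2, z.1 - z.2) := by
      rw [← hshear.map_eq] at hG_int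
      conv_lhs => rw [← hshear.map_eq]
      exact integral_map hshear.aemeasurable hG_int.aestronglyMeasurable
    _ = ∫ t, ∫ s, G (s, t - s) := integral_prod _ (hshear.integrable_comp_of_integrable hG_int)
    _ = _ := by simp only [hinner, integral_indicator measurableSet_Ioi]

theorem integrableOn_cpow_neg_mul {f : ℝ → ℂ} {a : ℂ}
    (hf : MellinConvergent f (1 - a)) :
    IntegrableOn (fun t : ℝ => (t : ℂ) ^ (-a) * f t) (Ioi 0) := by
  simpa [MellinConvergent] using hf

theorem mellin_one_sub (f : ℝ → ℂ) (a : ℂ) :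
    mellin f (1 - a) = ∫ t in Ioi (0 : ℝ), (t : ℂ) ^ (-a) * f t := by
  simp [mellin]

theorem rpow_neg_add_mul_rpow_mul_rpow_le_one {x y r q : ℝ} (hx : 0 < x) (hy : 0 < y)
    (hr : 0 ≤ r) (hq : 0 ≤ q) : (x + y) ^ (-(r + q)) * (x ^ r * y ^ q) ≤ 1 := by
  rw [Real.rpow_neg (by positivity), inv_mul_le_one₀ (by positivity),
    Real.rpow_add (by positivity)]
  gcongr <;> linarith

theorem integrableOn_prod_cpow_neg_mul {k f : ℝ → ℂ} {a b : ℂ}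
    (hk : MellinConvergent k (1 - a)) (hf : MellinConvergent f (1 - b)) :
    IntegrableOn (fun z : ℝ × ℝ => ((z.1 : ℂ) ^ (-a) * k z.1) * ((z.2 : ℂ) ^ (-b) * f z.2))
      (Ioi 0 ×ˢ Ioi 0) := by
  rw [IntegrableOn, Measure.volume_eq_prod, ← Measure.prod_restrict]
  exact (integrableOn_cpow_neg_mul hk).mul_prod (integrableOn_cpow_neg_mul hf)

theorem integrableOn_add_cpow_neg_mul {k f : ℝ → ℂ} {a b : ℂ} (ha : 0 ≤ a.re) (hb : 0 ≤ b.re)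
    (hk : MellinConvergent k (1 - a)) (hf : MellinConvergent f (1 - b)) :
    IntegrableOn (fun z : ℝ × ℝ => (z.1 + z.2 : ℂ) ^ (-(a + b)) * (k z.1 * f z.2))
      (Ioi 0 ×ˢ Ioi 0) := by
  have hquad : MeasurableSet (Ioi (0 : ℝ) ×ˢ Ioi (0 : ℝ)) :=
    measurableSet_Ioi.prod measurableSet_Ioi
  have hbdd := Integrable.bdd_mul (c := 1)
    (f := fun z : ℝ × ℝ => (z.1 + z.2 : ℂ) ^ (-(a + b)) * ((z.1 : ℂ) ^ a * (z.2 : ℂ) ^ b))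
    (integrableOn_prod_cpow_neg_mul hk hf) (Measurable.aestronglyMeasurable (by fun_prop)) <| by
      filter_upwards [ae_restrict_mem hquad] with z ⟨hx, hy⟩
      rw [norm_mul, norm_mul, norm_cpow_eq_rpow_re_of_pos hx, norm_cpow_eq_rpow_re_of_pos hy,
        ← ofReal_add, norm_cpow_eq_rpow_re_of_pos (add_pos hx hy), neg_re, add_re]
      exact rpow_neg_add_mul_rpow_mul_rpow_le_one hx hy ha hb
  refine IntegrableOn.congr_fun hbdd ?_ hquad
  rintro z ⟨hx, hy⟩
  have hx_cancel : (z.1 : ℂ) ^ a * (z.1 : ℂ) ^ (-a) = 1 := by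
    rw [← cpow_add _ _ (ofReal_ne_zero.mpr (ne_of_gt hx)), add_neg_cancel, cpow_zero]
  have hy_cancel : (z.2 : ℂ) ^ b * (z.2 : ℂ) ^ (-b) = 1 := by
    rw [← cpow_add _ _ (ofReal_ne_zero.mpr (ne_of_gt hy)), add_neg_cancel, cpow_zero]
  linear_combination (z.1 + z.2 : ℂ) ^ (-(a + b)) * (k z.1 * f z.2) *
    ((z.2 : ℂ) ^ b * (z.2 : ℂ) ^ (-b) * hx_cancel + hy_cancel)

theorem mellin_convolution_one_sub_add {k f : ℝ → ℂ} {a b : ℂ} (ha : 0 ≤ a.re) (hb : 0 ≤ b.re)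
    (hk : MellinConvergent k (1 - a)) (hf : MellinConvergent f (1 - b)) :
    mellin (fun t => ∫ s in (0 : ℝ)..t, k s * f (t - s)) (1 - (a + b)) =
      ∫ z in Ioi (0 : ℝ) ×ˢ Ioi (0 : ℝ), (z.1 + z.2 : ℂ) ^ (-(a + b)) * (k z.1 * f z.2) := by
  rw [setIntegral_Ioi_prod_Ioi_eq_integral_intervalIntegral
    (integrableOn_add_cpow_neg_mul ha hb hk hf), mellin_one_sub]
  refine setIntegral_congr_fun measurableSet_Ioi fun t _ => ?_
  simp only [← intervalIntegral.integral_const_mul, ofReal_sub, add_sub_cancel]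

theorem integrable_mul_prod_cpow_neg_add_mul_I {k f G : ℝ → ℂ} {a b : ℂ}
    (hk : MellinConvergent k (1 - a)) (hf : MellinConvergent f (1 - b)) (hG : Integrable G) :
    Integrable (fun w : (ℝ × ℝ) × ℝ => G w.2 *
      (((w.1.1 : ℂ) ^ (-(a - w.2 * I)) * k w.1.1) * ((w.1.2 : ℂ) ^ (-(b + w.2 * I)) * f w.1.2)))
      ((volume.restrict (Ioi 0 ×ˢ Ioi 0)).prod volume) := by
  have hpos : ∀ᵐ w ∂(volume.restrict (Ioi (0 : ℝ) ×ˢ Ioi (0 : ℝ))).prod (volume : Measure ℝ),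
      0 < w.1.1 ∧ 0 < w.1.2 :=
    Measure.quasiMeasurePreserving_fst.ae
      (ae_restrict_mem (measurableSet_Ioi.prod measurableSet_Ioi))
  have hbdd := Integrable.bdd_mul (c := 1)
    (f := fun w : (ℝ × ℝ) × ℝ => (w.1.1 : ℂ) ^ (w.2 * I) * (w.1.2 : ℂ) ^ (-(w.2 * I)))
    ((integrableOn_prod_cpow_neg_mul hk hf).mul_prod hG)
    (Measurable.aestronglyMeasurable (by fun_prop)) <| by
      filter_upwards [hpos] with w ⟨hx, hy⟩
      simp [norm_cpow_eq_rpow_re_of_pos hx, norm_cpow_eq_rpow_re_of_pos hy]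
  refine hbdd.congr ?_
  filter_upwards [hpos] with w ⟨hx, hy⟩
  rw [neg_sub, neg_add, sub_eq_add_neg, cpow_add _ _ (ofReal_ne_zero.mpr hx.ne'),
    cpow_add _ _ (ofReal_ne_zero.mpr hy.ne')]
  ring

theorem Gamma_mul_mellin_convolution_eq_integral {k f : ℝ → ℂ} {a : ℂ} {σ : ℝ}
    (ha : 0 < a.re) (hσ : 0 < σ) (hk : MellinConvergent k (1 - a))
    (hf : MellinConvergent f (1 - σ)) :
    Gamma (a + σ) * mellin (fun t => ∫ s in (0 : ℝ)..t, k s * f (t - s)) (1 - (a + σ)) =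
      (2 * Real.pi : ℂ)⁻¹ * ∫ η : ℝ, (Gamma (a - η * I) * mellin k (1 - (a - η * I))) *
        (Gamma (σ + η * I) * mellin f (1 - (σ + η * I))) := by
  let G : ℝ → ℂ := fun η => Gamma (a - η * I) * Gamma (σ + η * I)
  let M : ℝ × ℝ → ℝ → ℂ := fun z η =>
    ((z.1 : ℂ) ^ (-(a - η * I)) * k z.1) * ((z.2 : ℂ) ^ (-(σ + η * I)) * f z.2)
  have hG : Integrable G := integrable_Gamma_sub_mul_Gamma_add ha hσ
  calc
    _ = ∫ z in Ioi (0 : ℝ) ×ˢ Ioi (0 : ℝ),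
        Gamma (a + σ) * ((z.1 + z.2 : ℂ) ^ (-(a + σ)) * (k z.1 * f z.2)) := by
      rw [mellin_convolution_one_sub_add ha.le (by simpa using hσ.le) hk hf, integral_const_mul]
    _ = ∫ z in Ioi (0 : ℝ) ×ˢ Ioi (0 : ℝ), (2 * Real.pi : ℂ)⁻¹ * ∫ η, G η * M z η := by
      refine setIntegral_congr_fun (measurableSet_Ioi.prod measurableSet_Ioi) ?_
      rintro z ⟨hx, hy⟩
      beta_reduce
      rw [← mul_assoc, Gamma_mul_add_cpow_neg_eq_integral hx hy ha hσ, mul_assoc,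
        ← integral_mul_const]
      congr with η
      ring
    _ = (2 * Real.pi : ℂ)⁻¹ * ∫ η, ∫ z in Ioi (0 : ℝ) ×ˢ Ioi (0 : ℝ), G η * M z η := by
      rw [integral_const_mul,
        integral_integral_swap (integrable_mul_prod_cpow_neg_add_mul_I hk hf hG)]
    _ = _ := by
      congr with η
      rw [integral_const_mul, Measure.volume_eq_prod,
        setIntegral_prod_mul (fun x : ℝ => (x : ℂ) ^ (-(a - η * I)) * k x)
          (fun y : ℝ => (y : ℂ) ^ (-(σ + η * I)) * f y), ← mellin_one_sub, ← mellin_one_sub]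
      ring

theorem conj_cpow_ofReal_of_pos {t : ℝ} (ht : 0 < t) (s : ℂ) :
    starRingEnd ℂ ((t : ℂ) ^ s) = (t : ℂ) ^ starRingEnd ℂ s := by
  have harg : (t : ℂ).arg ≠ Real.pi := by
    rw [arg_ofReal_of_nonneg ht.le]
    exact Real.pi_ne_zero.symm
  rw [cpow_conj _ _ harg, conj_ofReal]

theorem conj_cpow_smul {f : ℝ → ℂ} {t : ℝ} (ht : 0 < t) (s : ℂ) :
    starRingEnd ℂ ((t : ℂ) ^ (s - 1) • f t) =
      (t : ℂ) ^ (starRingEnd ℂ s - 1) • starRingEnd ℂ (f t) := by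
  simp [conj_cpow_ofReal_of_pos ht]

theorem mellinConvergent_conj {f : ℝ → ℂ} {s : ℂ} (hf : MellinConvergent f s) :
    MellinConvergent (fun t => starRingEnd ℂ (f t)) (starRingEnd ℂ s) :=
  IntegrableOn.congr_fun (conjCLE.toContinuousLinearMap.integrable_comp hf)
    (fun _ ht => conj_cpow_smul ht s) measurableSet_Ioi

theorem mellin_conj (f : ℝ → ℂ) (s : ℂ) :
    mellin (fun t => starRingEnd ℂ (f t)) (starRingEnd ℂ s) = starRingEnd ℂ (mellin f s) := by
  rw [mellin, mellin, ← integral_conj]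
  exact setIntegral_congr_fun measurableSet_Ioi fun t ht => (conj_cpow_smul ht s).symm

theorem mellinConvergent_of_re_eq [NormedSpace ℂ E] {f : ℝ → E} {s s' : ℂ}
    (hf : MellinConvergent f s) (h : s.re = s'.re) : MellinConvergent f s' := by
  have hbdd := Integrable.bdd_smul (φ := fun t : ℝ => (t : ℂ) ^ (s' - s)) hf 1
    (Measurable.aestronglyMeasurable (by fun_prop)) <| by
      filter_upwards [ae_restrict_mem measurableSet_Ioi] with t ht
      simp [norm_cpow_eq_rpow_re_of_pos ht, h]
  refine IntegrableOn.congr_fun hbdd (fun t ht => ?_) measurableSet_Ioi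
  rw [Pi.smul_apply', smul_smul, ← cpow_add _ _ (ofReal_ne_zero.mpr (ne_of_gt ht))]
  ring_nf

theorem integral_cexp_smul_comp_exp [NormedSpace ℂ E] (F : ℝ → E) (ξ : ℝ) :
    ∫ x : ℝ, exp (-(I * x * ξ)) • F (Real.exp x) = mellin F (-(I * ξ)) := by
  rw [mellin_eq_fourier, Real.fourier_eq', ← integral_neg_eq_self]
  congr with x
  have hπ : (Real.pi : ℂ) ≠ 0 := ofReal_ne_zero.mpr Real.pi_ne_zero
  simp only [ofReal_neg, mul_neg, neg_mul, neg_neg, neg_im, mul_im, I_re, ofReal_im, mul_zero, I_im,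
    ofReal_re, one_mul, zero_add, RCLike.inner_apply, Real.ringHom_apply, ofReal_mul, ofReal_ofNat,
    ofReal_div, neg_re, mul_re, zero_mul, sub_self, neg_zero, Real.exp_zero, one_smul]
  field_simp

theorem IsTestFun.mellinConvergent {f : ℝ → ℂ} (hf : IsTestFun f) (s : ℂ) :
    MellinConvergent f s := by
  obtain ⟨hsmooth, hcompact, hpos⟩ := hf
  have hcont : ContinuousOn (fun t : ℝ => (t : ℂ) ^ (s - 1) • f t) (tsupport f) :=
    ContinuousOn.smul (fun t ht => (continuousAt_ofReal_cpow_const t _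
      (Or.inr (ne_of_gt (hpos ht)))).continuousWithinAt) hsmooth.continuous.continuousOn
  refine (hcont.integrableOn_compact hcompact).of_forall_sdiff_eq_zero measurableSet_Ioi ?_
  rintro t ⟨-, ht⟩
  rw [image_eq_zero_of_notMem_tsupport ht, smul_zero]

theorem mellinT_eq_mellin (f : ℝ → ℂ) (ξ : ℝ) :
    mellinT f ξ = (Real.sqrt (2 * Real.pi) : ℂ)⁻¹ * mellin f (1 / 2 - I * ξ) := by
  rw [mellinT, mellin]
  congr with t
  rw [smul_eq_mul, mul_comm]
  ring_nf

theorem conj_Gamma_mul_mellinT (f : ℝ → ℂ) (ξ : ℝ) :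
    starRingEnd ℂ (Gamma (1 / 2 + I * ξ) * mellinT f ξ) =
      (Real.sqrt (2 * Real.pi) : ℂ)⁻¹ * (Gamma (1 / 2 - I * ξ) *
        mellin (fun t => starRingEnd ℂ (f t)) (1 / 2 + I * ξ)) := by
  have hconj : 1 / 2 + I * ξ = starRingEnd ℂ (1 / 2 - I * ξ) := by
    simp [conj_ofNat]
  rw [mellinT_eq_mellin, map_mul, map_mul, ← Gamma_conj, ← mellin_conj, hconj, conj_conj,
    map_inv₀, conj_ofReal]
  ring

theorem Gamma_mul_mellin_laplaceConv_eq_integral {f₁ f₂ : ℝ → ℂ}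
    (hf₁ : MellinConvergent f₁ (1 / 2)) (hf₂ : MellinConvergent f₂ (1 / 2)) (ξ : ℝ) :
    Gamma (1 + I * ξ) * mellin (laplaceConv f₁ f₂) (-(I * ξ)) =
      ∫ η : ℝ, starRingEnd ℂ (Gamma (1 / 2 + I * (η - ξ)) * mellinT f₁ (η - ξ)) *
        (Gamma (1 / 2 + I * η) * mellinT f₂ η) := by
  have hsqrt_inv : (Real.sqrt (2 * Real.pi) : ℂ)⁻¹ * (Real.sqrt (2 * Real.pi) : ℂ)⁻¹ =
      (2 * Real.pi : ℂ)⁻¹ := by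
    rw [← mul_inv, ← ofReal_mul, Real.mul_self_sqrt (by positivity), ofReal_mul, ofReal_ofNat]
  have hconv := Gamma_mul_mellin_convolution_eq_integral (a := 1 / 2 + I * ξ) (σ := 1 / 2)
    (by norm_num) (by norm_num)
    (mellinConvergent_of_re_eq (mellinConvergent_conj hf₁) (by norm_num))
    (mellinConvergent_of_re_eq hf₂ (by norm_num))
  convert hconv using 1
  · congr 2
    · push_cast
      ring
    · push_cast
      ring
  · rw [← integral_const_mul]
    congr with η
    rw [← ofReal_sub, conj_Gamma_mul_mellinT, mellinT_eq_mellin, ← hsqrt_inv]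
    push_cast
    ring_nf

end

theorem main_identity_fourier_of_convolution_general (f₁ f₂ : ℝ → ℂ)
    (hf₁ : MellinConvergent f₁ (1 / 2)) (hf₂ : MellinConvergent f₂ (1 / 2)) (ξ : ℝ) :
    (Real.sqrt (2 * Real.pi) : ℂ) * Complex.Gamma (1 + Complex.I * ξ) *
        ((Real.sqrt (2 * Real.pi) : ℂ)⁻¹ *
          ∫ x : ℝ, laplaceConv f₁ f₂ (Real.exp x) * Complex.exp (-(Complex.I * x * ξ))) =
      ∫ η : ℝ,
        (starRingEnd ℂ) (Complex.Gamma (1/2 + Complex.I * (η - ξ)) * mellinT f₁ (η - ξ)) *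
          (Complex.Gamma (1/2 + Complex.I * η) * mellinT f₂ η) := by
  have hsqrt : (Real.sqrt (2 * Real.pi) : ℂ) ≠ 0 := Complex.ofReal_ne_zero.mpr (by positivity)
  have hfourier : ∫ x : ℝ, laplaceConv f₁ f₂ (Real.exp x) * Complex.exp (-(Complex.I * x * ξ)) =
      mellin (laplaceConv f₁ f₂) (-(Complex.I * ξ)) := by
    simp only [← integral_cexp_smul_comp_exp, smul_eq_mul, mul_comm]
  rw [mul_mul_mul_comm, mul_inv_cancel₀ hsqrt, one_mul, hfourier,
    Gamma_mul_mellin_laplaceConv_eq_integral hf₁ hf₂]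

/-- The main identity: `√(2π) Γ(1+iξ) (ΦΩ)(ξ) = ((J ḡ₁) * g₂)(ξ)` with
`Ω(x) = F(eˣ)`, `g_j(ξ) = Γ(1/2+iξ)(M f_j)(ξ)`, `Φ` the Fourier transform. -/
theorem main_identity_fourier_of_convolution (f₁ f₂ : ℝ → ℂ)
    (hf₁ : IsTestFun f₁) (hf₂ : IsTestFun f₂) (ξ : ℝ) :
    (Real.sqrt (2 * Real.pi) : ℂ) * Complex.Gamma (1 + Complex.I * ξ) *
        ((Real.sqrt (2 * Real.pi) : ℂ)⁻¹ *
          ∫ x : ℝ, laplaceConv f₁ f₂ (Real.exp x) * Complex.exp (-(Complex.I * x * ξ))) =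
      ∫ η : ℝ,
        (starRingEnd ℂ) (Complex.Gamma (1/2 + Complex.I * (η - ξ)) * mellinT f₁ (η - ξ)) *
          (Complex.Gamma (1/2 + Complex.I * η) * mellinT f₂ η) :=
  main_identity_fourier_of_convolution_general f₁ f₂ (hf₁.mellinConvergent _)
    (hf₂.mellinConvergent _) ξ
end
end

section
/- For every κ > 2 there exists a constant C = C(κ) such that for every complex-valued F ∈ C_c^∞((0,∞)) (extended by zero to ℝ), ∫_ℝ |(Φ* F)(λ)| dλ ≤ C Σ_{n=0}^{2} sup_{t > 0} ( (1+|ln t|)^κ · t^n · |F^{(n)}(t)| ), where (Φ* F)(λ) = (2π)^{-1/2} ∫₀^∞ F(t) e^{iλt} dt is the inverse Fourier transform. -/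
open MeasureTheory
open scoped ComplexOrder

noncomputable section

/-!
At the frequency `l` the Fourier integral is split at `a = |l|⁻¹`: on `(0, a)` absolute values are
taken, and on `(a, ∞)` two integrations by parts gain a factor `a` each, giving
`∫₀ᵃ ‖F‖ + a ‖F a‖ + a² ‖F' a‖ + a² ∫ₐ^∞ ‖F''‖`. In the variable `a` the measure `dl` becomes
`a⁻² da`, and by Tonelli the integral over all frequencies is at most a multiple of
`∫ t⁻¹ ‖F‖ dt + ∫ ‖F'‖ dt + ∫ t ‖F''‖ dt`. Each term is `∫ tⁿ ‖F⁽ⁿ⁾‖ dt / t`, which the weighted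
supremum controls because `∫₀^∞ (1 + |log t|)^(-κ) dt / t = 2 / (κ - 1)` for `κ > 1`.
-/

section LebesgueIntegrals

open Set
open scoped ENNReal Pointwise

lemma lintegral_comp_abs (g : ℝ → ℝ≥0∞) : ∫⁻ x, g |x| = 2 * ∫⁻ x in Ioi 0, g x := by
  have hpos : ∫⁻ x in Ioi 0, g |x| = ∫⁻ x in Ioi 0, g x :=
    setLIntegral_congr_fun measurableSet_Ioi fun x hx => by rw [abs_of_pos hx]
  have hneg : ∫⁻ x in Iic 0, g |x| = ∫⁻ x in Ioi 0, g |x| := by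
    have h := (Measure.measurePreserving_neg (volume : Measure ℝ)).setLIntegral_comp_preimage_emb
      (MeasurableEquiv.neg ℝ).measurableEmbedding (fun x => g |x|) (Iio 0)
    simp only [abs_neg, neg_preimage, neg_Iio, neg_zero] at h
    rw [h, setLIntegral_congr Iio_ae_eq_Iic]
  rw [← lintegral_add_compl _ (measurableSet_Ioi (a := (0 : ℝ))), compl_Ioi, hneg, hpos, two_mul]

lemma setLIntegral_inv_sq_mul_comp_inv {A : Set ℝ} (hA : MeasurableSet A) (hA0 : 0 ∉ A)
    (g : ℝ → ℝ≥0∞) :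
    ∫⁻ x in A, ENNReal.ofReal (x⁻¹ ^ 2) * g x⁻¹ = ∫⁻ x in A⁻¹, g x := by
  have hderiv : ∀ x ∈ A, HasDerivWithinAt (fun y : ℝ => y⁻¹) (-(x ^ 2)⁻¹) A x := fun x hx =>
    (hasDerivAt_inv (ne_of_mem_of_not_mem hx hA0)).hasDerivWithinAt
  rw [← image_inv_eq_inv,
    lintegral_image_eq_lintegral_abs_deriv_mul hA hderiv inv_injective.injOn]
  simp [abs_of_nonneg, sq_nonneg]

lemma lintegral_Ioi_zero_inv_sq_mul_comp_inv (g : ℝ → ℝ≥0∞) :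
    ∫⁻ x in Ioi (0 : ℝ), ENNReal.ofReal (x⁻¹ ^ 2) * g x⁻¹ = ∫⁻ x in Ioi 0, g x := by
  have hinv : (Ioi (0 : ℝ))⁻¹ = Ioi 0 := by ext; simp
  rw [setLIntegral_inv_sq_mul_comp_inv measurableSet_Ioi self_notMem_Ioi, hinv]

lemma lintegral_Ioi_inv_sq {c : ℝ} (hc : 0 < c) :
    ∫⁻ x in Ioi c, ENNReal.ofReal (x⁻¹ ^ 2) = ENNReal.ofReal c⁻¹ := by
  have h := setLIntegral_inv_sq_mul_comp_inv measurableSet_Ioi (notMem_Ioi.2 hc.le) fun _ => 1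
  simpa [inv_Ioi₀ hc] using h

lemma lintegral_mul_setLIntegral_Ioi {μ ν : Measure ℝ} [SFinite μ] [SFinite ν] {f g : ℝ → ℝ≥0∞}
    (hf : AEMeasurable f μ) (hg : AEMeasurable g ν) :
    ∫⁻ a, f a * ∫⁻ t in Ioi a, g t ∂ν ∂μ = ∫⁻ t, g t * ∫⁻ a in Iio t, f a ∂μ ∂ν := by
  set k : ℝ → ℝ → ℝ≥0∞ := fun a t => (Ioi a).indicator (fun t => f a * g t) t
  have hk : AEMeasurable (Function.uncurry k) (μ.prod ν) :=
    (hf.comp_fst.mul hg.comp_snd).indicator (measurableSet_lt measurable_fst measurable_snd)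
  have hleft : ∀ a, f a * ∫⁻ t in Ioi a, g t ∂ν = ∫⁻ t, k a t ∂ν := fun a => by
    rw [lintegral_indicator measurableSet_Ioi, lintegral_const_mul'' _ hg.restrict]
  have hright : ∀ t, g t * ∫⁻ a in Iio t, f a ∂μ = ∫⁻ a, k a t ∂μ := fun t => by
    rw [← lintegral_const_mul'' _ hf.restrict, ← lintegral_indicator measurableSet_Iio]
    simp only [k, indicator, mem_Ioi, mem_Iio, mul_comm]
  simp_rw [hleft, hright]
  exact lintegral_lintegral_swap hk

lemma lintegral_Ioi_zero_mul_setLIntegral_Ioi {f g : ℝ → ℝ≥0∞}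
    (hf : AEMeasurable f (volume.restrict (Ioi 0)))
    (hg : AEMeasurable g (volume.restrict (Ioi 0))) :
    ∫⁻ a in Ioi 0, f a * ∫⁻ t in Ioi a, g t = ∫⁻ t in Ioi 0, g t * ∫⁻ a in Ioo 0 t, f a := by
  have h := lintegral_mul_setLIntegral_Ioi hf hg
  simp only [Measure.restrict_restrict measurableSet_Iio, inter_comm (Iio _) (Ioi _),
    Ioi_inter_Iio] at h
  rw [← h]
  refine setLIntegral_congr_fun measurableSet_Ioi fun a (ha : 0 < a) => ?_
  rw [Measure.restrict_restrict measurableSet_Ioi, inter_eq_left.2 (Ioi_subset_Ioi ha.le)]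

lemma lintegral_Ioi_zero_setLIntegral_Ioi {g : ℝ → ℝ≥0∞}
    (hg : AEMeasurable g (volume.restrict (Ioi 0))) :
    ∫⁻ a in Ioi 0, ∫⁻ t in Ioi a, g t = ∫⁻ t in Ioi 0, ENNReal.ofReal t * g t := by
  simpa [mul_comm] using lintegral_Ioi_zero_mul_setLIntegral_Ioi aemeasurable_const hg (f := 1)

lemma lintegral_Ioi_zero_inv_sq_mul_setLIntegral_Ioo {g : ℝ → ℝ≥0∞}
    (hg : AEMeasurable g (volume.restrict (Ioi 0))) :
    ∫⁻ a in Ioi 0, ENNReal.ofReal (a⁻¹ ^ 2) * ∫⁻ t in Ioo 0 a, g t =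
      ∫⁻ t in Ioi 0, ENNReal.ofReal t⁻¹ * g t := by
  rw [← lintegral_Ioi_zero_mul_setLIntegral_Ioi hg (by fun_prop)]
  refine setLIntegral_congr_fun measurableSet_Ioi fun t ht => ?_
  rw [lintegral_Ioi_inv_sq ht, mul_comm]

end LebesgueIntegrals

section SplitMajorant

open Set
open scoped ENNReal

variable {E : Type*} [NormedAddCommGroup E] {F F' F'' : ℝ → E}

/-- `a⁻²` times the bound on the Fourier integral of `F` at the frequencies `±a⁻¹` obtained by
taking absolute values on `(0, a)` and integrating by parts twice on `(a, ∞)`. The functions `F'`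
and `F''` stand for the derivatives of `F`. -/
def splitMajorant (F F' F'' : ℝ → E) (a : ℝ) : ℝ≥0∞ :=
  ENNReal.ofReal (a⁻¹ ^ 2) * (∫⁻ t in Ioo 0 a, ‖F t‖ₑ) + ENNReal.ofReal a⁻¹ * ‖F a‖ₑ + ‖F' a‖ₑ +
    ∫⁻ t in Ioi a, ‖F'' t‖ₑ

lemma lintegral_splitMajorant [NormedSpace ℝ E]
    (hF : AEStronglyMeasurable F (volume.restrict (Ioi 0)))
    (hF' : AEStronglyMeasurable F' (volume.restrict (Ioi 0)))
    (hF'' : AEStronglyMeasurable F'' (volume.restrict (Ioi 0))) :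
    ∫⁻ a in Ioi 0, splitMajorant F F' F'' a =
      2 * (∫⁻ t in Ioi 0, ‖t⁻¹ • F t‖ₑ) + (∫⁻ t in Ioi 0, ‖F' t‖ₑ) +
        ∫⁻ t in Ioi 0, ‖t • F'' t‖ₑ := by
  have hnear : Measurable fun a => ∫⁻ t in Ioo 0 a, ‖F t‖ₑ :=
    Monotone.measurable fun _ _ hab => lintegral_mono_set (Ioo_subset_Ioo_right hab)
  have hsmul : ∀ (c : ℝ → ℝ) (G : ℝ → E), (∀ t > 0, 0 ≤ c t) →
      ∫⁻ t in Ioi 0, ENNReal.ofReal (c t) * ‖G t‖ₑ = ∫⁻ t in Ioi 0, ‖c t • G t‖ₑ :=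
    fun c G hc => setLIntegral_congr_fun measurableSet_Ioi fun t ht => by
      rw [enorm_smul, Real.enorm_eq_ofReal (hc t ht)]
  have hinv := hsmul (fun t => t⁻¹) F fun t ht => inv_nonneg.2 ht.le
  have hid := hsmul (fun t => t) F'' fun t ht => ht.le
  unfold splitMajorant
  rw [lintegral_add_left' (by fun_prop), lintegral_add_left' (by fun_prop),
    lintegral_add_left' (by fun_prop), lintegral_Ioi_zero_inv_sq_mul_setLIntegral_Ioo hF.enorm,
    lintegral_Ioi_zero_setLIntegral_Ioi hF''.enorm, hinv, hid, two_mul]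

end SplitMajorant

section FourierIntegral

open Set Complex

variable {E : Type*} [NormedAddCommGroup E] [NormedSpace ℂ E] {F F' F'' : ℝ → E} {a l : ℝ}

lemma norm_cexp_I_mul_ofReal_mul_ofReal (l t : ℝ) : ‖cexp (I * l * t)‖ = 1 := by
  rw [mul_assoc, ← ofReal_mul, norm_exp_I_mul_ofReal]

lemma integrableOn_cexp_smul {s : Set ℝ} (hF : IntegrableOn F s) (l : ℝ) :
    IntegrableOn (fun t : ℝ => cexp (I * l * t) • F t) s :=
  Integrable.bdd_smul (C := 1) hF (by fun_prop)
    (.of_forall fun t => (norm_cexp_I_mul_ofReal_mul_ofReal l t).le)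

lemma enorm_setIntegral_cexp_smul_le (F : ℝ → E) (s : Set ℝ) (l : ℝ) :
    ‖∫ t in s, cexp (I * l * t) • F t‖ₑ ≤ ∫⁻ t in s, ‖F t‖ₑ := by
  refine (enorm_integral_le_lintegral_enorm _).trans_eq ?_
  simp_rw [enorm_smul, ← ofReal_norm (cexp _), norm_cexp_I_mul_ofReal_mul_ofReal,
    ENNReal.ofReal_one, one_mul]

lemma setIntegral_Ioi_cexp_smul [CompleteSpace E] (hl : l ≠ 0)
    (hderiv : ∀ t ∈ Ici a, HasDerivAt F (F' t) t)
    (hF : IntegrableOn F (Ioi a)) (hF' : IntegrableOn F' (Ioi a)) :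
    ∫ t in Ioi a, cexp (I * l * t) • F t =
      -(I * l)⁻¹ • (cexp (I * l * a) • F a + ∫ t in Ioi a, cexp (I * l * t) • F' t) := by
  have hc : I * l ≠ 0 := mul_ne_zero I_ne_zero (ofReal_ne_zero.2 hl)
  have hexp : ∀ t : ℝ, HasDerivAt (fun t : ℝ => cexp (I * l * t)) (I * l * cexp (I * l * t)) t :=
    fun t => by
      simpa [mul_comm] using ((hasDerivAt_id t).ofReal_comp.const_mul (I * (l : ℂ))).cexp
  have hprod : ∀ t ∈ Ici a, HasDerivAt (fun t : ℝ => cexp (I * l * t) • F t)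
      (cexp (I * l * t) • F' t + (I * l) • cexp (I * l * t) • F t) t := fun t ht =>
    ((hexp t).smul (hderiv t ht)).congr_deriv (by rw [mul_smul])
  have hint := integrableOn_cexp_smul hF l
  have hint' := integrableOn_cexp_smul hF' l
  have hint_smul : IntegrableOn (fun t : ℝ => (I * l) • cexp (I * l * t) • F t) (Ioi a) :=
    hint.smul (I * (l : ℂ))
  have hFTC := integral_Ioi_of_hasDerivAt_of_tendsto' hprod (hint'.add hint_smul)
    (tendsto_zero_of_hasDerivAt_of_integrableOn_Ioi (fun t ht => hprod t (Ioi_subset_Ici_self ht))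
      (hint'.add hint_smul) hint)
  rw [integral_add hint' hint_smul, integral_smul, zero_sub] at hFTC
  rw [neg_smul, ← smul_neg, eq_inv_smul_iff₀ hc, neg_add, ← hFTC]
  abel

lemma enorm_setIntegral_Ioi_cexp_smul_le [CompleteSpace E] (hl : l ≠ 0)
    (hderiv : ∀ t ∈ Ici a, HasDerivAt F (F' t) t)
    (hF : IntegrableOn F (Ioi a)) (hF' : IntegrableOn F' (Ioi a)) :
    ‖∫ t in Ioi a, cexp (I * l * t) • F t‖ₑ ≤
      ‖l⁻¹‖ₑ * (‖F a‖ₑ + ‖∫ t in Ioi a, cexp (I * l * t) • F' t‖ₑ) := by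
  have hcoeff : ‖-(I * (l : ℂ))⁻¹‖ₑ = ‖l⁻¹‖ₑ := by
    simp [← ofReal_norm]
  have hboundary : ‖cexp (I * l * a) • F a‖ₑ = ‖F a‖ₑ := by
    simp [← ofReal_norm, norm_smul, norm_cexp_I_mul_ofReal_mul_ofReal]
  rw [setIntegral_Ioi_cexp_smul hl hderiv hF hF', enorm_smul, hcoeff, ← hboundary]
  gcongr
  exact enorm_add_le _ _

lemma enorm_setIntegral_Ioi_cexp_smul_le_of_second_deriv [CompleteSpace E] (hl : l ≠ 0)
    (hderiv : ∀ t ∈ Ici a, HasDerivAt F (F' t) t) (hderiv' : ∀ t ∈ Ici a, HasDerivAt F' (F'' t) t)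
    (hF : IntegrableOn F (Ioi a)) (hF' : IntegrableOn F' (Ioi a))
    (hF'' : IntegrableOn F'' (Ioi a)) :
    ‖∫ t in Ioi a, cexp (I * l * t) • F t‖ₑ ≤
      ‖l⁻¹‖ₑ * (‖F a‖ₑ + ‖l⁻¹‖ₑ * (‖F' a‖ₑ + ∫⁻ t in Ioi a, ‖F'' t‖ₑ)) := calc
  _ ≤ ‖l⁻¹‖ₑ * (‖F a‖ₑ + ‖∫ t in Ioi a, cexp (I * l * t) • F' t‖ₑ) :=
    enorm_setIntegral_Ioi_cexp_smul_le hl hderiv hF hF'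
  _ ≤ ‖l⁻¹‖ₑ * (‖F a‖ₑ + ‖l⁻¹‖ₑ * (‖F' a‖ₑ + ‖∫ t in Ioi a, cexp (I * l * t) • F'' t‖ₑ)) := by
    gcongr
    exact enorm_setIntegral_Ioi_cexp_smul_le hl hderiv' hF' hF''
  _ ≤ _ := by
    gcongr
    exact enorm_setIntegral_cexp_smul_le F'' _ l

lemma enorm_setIntegral_Ioi_zero_cexp_smul_le [CompleteSpace E] (hl : l ≠ 0)
    (hderiv : ∀ t ∈ Ioi 0, HasDerivAt F (F' t) t) (hderiv' : ∀ t ∈ Ioi 0, HasDerivAt F' (F'' t) t)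
    (hF : IntegrableOn F (Ioi 0)) (hF' : IntegrableOn F' (Ioi 0))
    (hF'' : ∀ a > 0, IntegrableOn F'' (Ioi a)) :
    ‖∫ t in Ioi (0 : ℝ), cexp (I * l * t) • F t‖ₑ ≤
      ENNReal.ofReal (|l|⁻¹ ^ 2) * splitMajorant F F' F'' |l|⁻¹ := by
  set a := |l|⁻¹
  have ha : 0 < a := by positivity
  have hsub : Ici a ⊆ Ioi 0 := Ici_subset_Ioi.2 ha
  have hsub' : Ioi a ⊆ Ioi 0 := Ioi_subset_Ioi ha.le
  have hla : ‖l⁻¹‖ₑ = ENNReal.ofReal a := by rw [← ofReal_norm, norm_inv, Real.norm_eq_abs]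
  have hnear : ‖∫ t in Ioc 0 a, cexp (I * l * t) • F t‖ₑ ≤ ∫⁻ t in Ioo 0 a, ‖F t‖ₑ :=
    (enorm_setIntegral_cexp_smul_le F _ l).trans_eq (setLIntegral_congr Ioo_ae_eq_Ioc.symm)
  have hfar := enorm_setIntegral_Ioi_cexp_smul_le_of_second_deriv hl
    (fun t ht => hderiv t (hsub ht)) (fun t ht => hderiv' t (hsub ht)) (hF.mono_set hsub')
    (hF'.mono_set hsub') (hF'' a ha)
  rw [hla] at hfar
  have hcancel : ENNReal.ofReal a * ENNReal.ofReal a⁻¹ = 1 := by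
    rw [← ENNReal.ofReal_mul ha.le, mul_inv_cancel₀ ha.ne', ENNReal.ofReal_one]
  have hFl := integrableOn_cexp_smul hF l
  rw [← Ioc_union_Ioi_eq_Ioi ha.le, setIntegral_union (Ioc_disjoint_Ioi le_rfl) measurableSet_Ioi
    (hFl.mono_set Ioc_subset_Ioi_self) (hFl.mono_set hsub')]
  refine ((enorm_add_le _ _).trans (add_le_add hnear hfar)).trans_eq ?_
  rw [splitMajorant, ENNReal.ofReal_pow ha.le, ENNReal.ofReal_pow (inv_nonneg.2 ha.le)]
  calc
    _ = (ENNReal.ofReal a * ENNReal.ofReal a⁻¹) ^ 2 * (∫⁻ t in Ioo 0 a, ‖F t‖ₑ) +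
        ENNReal.ofReal a * ((ENNReal.ofReal a * ENNReal.ofReal a⁻¹) * ‖F a‖ₑ +
          ENNReal.ofReal a * (‖F' a‖ₑ + ∫⁻ t in Ioi a, ‖F'' t‖ₑ)) := by
      rw [hcancel, one_pow, one_mul, one_mul]
    _ = _ := by ring

theorem lintegral_enorm_setIntegral_cexp_smul_le [CompleteSpace E]
    (hderiv : ∀ t ∈ Ioi 0, HasDerivAt F (F' t) t) (hderiv' : ∀ t ∈ Ioi 0, HasDerivAt F' (F'' t) t)
    (hF : IntegrableOn F (Ioi 0)) (hF' : IntegrableOn F' (Ioi 0))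
    (hF'' : IntegrableOn (fun t => t • F'' t) (Ioi 0)) :
    ∫⁻ l : ℝ, ‖∫ t in Ioi (0 : ℝ), cexp (I * l * t) • F t‖ₑ ≤
      2 * (2 * (∫⁻ t in Ioi 0, ‖t⁻¹ • F t‖ₑ) + (∫⁻ t in Ioi 0, ‖F' t‖ₑ) +
        ∫⁻ t in Ioi 0, ‖t • F'' t‖ₑ) := by
  have hinv_smul : EqOn (fun t => t⁻¹ • t • F'' t) F'' (Ioi 0) := fun t (ht : 0 < t) =>
    inv_smul_smul₀ ht.ne' _
  have hF''_meas : AEStronglyMeasurable F'' (volume.restrict (Ioi 0)) :=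
    (measurable_inv.aestronglyMeasurable.smul hF''.aestronglyMeasurable).congr
      (hinv_smul.aeEq_restrict measurableSet_Ioi)
  have hF''_int : ∀ a > 0, IntegrableOn F'' (Ioi a) := fun a ha => by
    have hsub : Ioi a ⊆ Ioi 0 := Ioi_subset_Ioi ha.le
    refine ((hF''.mono_set hsub).smul a⁻¹).mono (hF''_meas.mono_set hsub) ?_
    filter_upwards [self_mem_ae_restrict measurableSet_Ioi] with t (ht : a < t)
    rw [Pi.smul_apply, smul_smul, norm_smul, inv_mul_eq_div]
    exact le_mul_of_one_le_left (norm_nonneg _) (((one_le_div ha).2 ht.le).trans (le_abs_self _))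
  have hne : ∀ᵐ l : ℝ, l ≠ 0 := by simp [ae_iff]
  calc
    _ ≤ ∫⁻ l : ℝ, ENNReal.ofReal (|l|⁻¹ ^ 2) * splitMajorant F F' F'' |l|⁻¹ := by
      refine lintegral_mono_ae ?_
      filter_upwards [hne] with l hl
      exact enorm_setIntegral_Ioi_zero_cexp_smul_le hl hderiv hderiv' hF hF' hF''_int
    _ = 2 * ∫⁻ a in Ioi 0, splitMajorant F F' F'' a := by
      rw [lintegral_comp_abs fun s => ENNReal.ofReal (s⁻¹ ^ 2) * splitMajorant F F' F'' s⁻¹,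
        lintegral_Ioi_zero_inv_sq_mul_comp_inv]
    _ = _ := by
      rw [lintegral_splitMajorant hF.aestronglyMeasurable hF'.aestronglyMeasurable hF''_meas]

end FourierIntegral

section IteratedDeriv

open Set Complex

lemma continuousOn_iteratedDeriv {𝕜 E : Type*} [NontriviallyNormedField 𝕜] [NormedAddCommGroup E]
    [NormedSpace 𝕜 E] {F : 𝕜 → E} {s : Set 𝕜} {N : WithTop ℕ∞} {n : ℕ} (hF : ContDiffOn 𝕜 N F s)
    (hs : IsOpen s) (hn : n ≤ N) : ContinuousOn (iteratedDeriv n F) s :=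
  (hF.continuousOn_iteratedDerivWithin hn hs.uniqueDiffOn).congr
    (iteratedDerivWithin_of_isOpen hs).symm

lemma hasDerivAt_iteratedDeriv {𝕜 E : Type*} [NontriviallyNormedField 𝕜] [NormedAddCommGroup E]
    [NormedSpace 𝕜 E] {F : 𝕜 → E} {s : Set 𝕜} {N : WithTop ℕ∞} {n : ℕ} (hF : ContDiffOn 𝕜 N F s)
    (hs : IsOpen s) (hn : n < N) {t : 𝕜} (ht : t ∈ s) :
    HasDerivAt (iteratedDeriv n F) (iteratedDeriv (n + 1) F t) t := by
  have hdiff : DifferentiableOn 𝕜 (iteratedDeriv n F) s :=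
    (hF.differentiableOn_iteratedDerivWithin hn hs.uniqueDiffOn).congr
      (iteratedDerivWithin_of_isOpen hs).symm
  rw [iteratedDeriv_succ]
  exact (hdiff.differentiableAt (hs.mem_nhds ht)).hasDerivAt

variable {E : Type*} [NormedAddCommGroup E] [NormedSpace ℂ E] {F : ℝ → E}

theorem lintegral_enorm_setIntegral_cexp_smul_le_sum [CompleteSpace E]
    (hF : IntegrableOn F (Ioi 0)) (hdiff : ContDiffOn ℝ 2 F (Ioi 0)) :
    ∫⁻ l : ℝ, ‖∫ t in Ioi (0 : ℝ), cexp (I * l * t) • F t‖ₑ ≤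
      4 * ∑ n ∈ Finset.range 3, ∫⁻ t in Ioi 0, ‖t ^ (n - 1 : ℤ) • iteratedDeriv n F t‖ₑ := by
  obtain htop | hfin := eq_or_ne
    (∑ n ∈ Finset.range 3, ∫⁻ t in Ioi 0, ‖t ^ (n - 1 : ℤ) • iteratedDeriv n F t‖ₑ) ⊤
  · simp [htop]
  have hint : ∀ n : ℕ, n < 3 →
      IntegrableOn (fun t : ℝ => t ^ (n - 1 : ℤ) • iteratedDeriv n F t) (Ioi 0) := fun n hn => by
    have hpow : ContinuousOn (fun t : ℝ => t ^ (n - 1 : ℤ)) (Ioi 0) := fun t (ht : 0 < t) =>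
      (continuousAt_zpow₀ t _ (.inl ht.ne')).continuousWithinAt
    have hD : ContinuousOn (iteratedDeriv n F) (Ioi 0) :=
      continuousOn_iteratedDeriv hdiff isOpen_Ioi (by exact_mod_cast Nat.le_of_lt_succ hn)
    exact ⟨(hpow.smul hD).aestronglyMeasurable measurableSet_Ioi,
      (ENNReal.sum_ne_top.1 hfin n (Finset.mem_range.2 hn)).lt_top⟩
  have hderiv : ∀ t ∈ Ioi 0, HasDerivAt F (iteratedDeriv 1 F t) t := fun t ht => by
    simpa only [iteratedDeriv_zero] using
      hasDerivAt_iteratedDeriv (n := 0) hdiff isOpen_Ioi (by norm_num) ht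
  have hderiv' : ∀ t ∈ Ioi 0, HasDerivAt (iteratedDeriv 1 F) (iteratedDeriv 2 F t) t :=
    fun t ht => hasDerivAt_iteratedDeriv hdiff isOpen_Ioi (by norm_num) ht
  calc
    _ ≤ 2 * (2 * (∫⁻ t in Ioi 0, ‖t⁻¹ • F t‖ₑ) + (∫⁻ t in Ioi 0, ‖iteratedDeriv 1 F t‖ₑ) +
          ∫⁻ t in Ioi 0, ‖t • iteratedDeriv 2 F t‖ₑ) :=
      lintegral_enorm_setIntegral_cexp_smul_le hderiv hderiv' hF
        (by simpa using hint 1 (by norm_num)) (by simpa using hint 2 (by norm_num))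
    _ ≤ 2 * (2 * (∫⁻ t in Ioi 0, ‖t⁻¹ • F t‖ₑ) + 2 * (∫⁻ t in Ioi 0, ‖iteratedDeriv 1 F t‖ₑ) +
          2 * ∫⁻ t in Ioi 0, ‖t • iteratedDeriv 2 F t‖ₑ) := by
      gcongr <;> exact le_mul_of_one_le_left' one_le_two
    _ = _ := by
      simp only [iteratedDeriv_one, Finset.sum_range_succ, Finset.range_one, Finset.sum_singleton,
        Nat.cast_zero, zero_sub, zpow_neg, zpow_one, iteratedDeriv_zero, Nat.cast_one,
        sub_self, zpow_zero, one_smul, Nat.cast_ofNat, Int.reduceSub]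
      ring

end IteratedDeriv

section LogWeight

open Set
open scoped ENNReal

lemma lintegral_one_add_abs_rpow_neg {κ : ℝ} (hκ : 1 < κ) :
    ∫⁻ x : ℝ, ENNReal.ofReal ((1 + |x|) ^ (-κ)) = ENNReal.ofReal (2 / (κ - 1)) := by
  have hκ' : -κ < -1 := neg_lt_neg hκ
  have hshift := (measurePreserving_add_left volume (1 : ℝ)).setLIntegral_comp_preimage_emb
    (measurableEmbedding_addLeft 1) (fun x => ENNReal.ofReal (x ^ (-κ))) (Ioi 1)
  rw [preimage_const_add_Ioi, sub_self] at hshift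
  rw [lintegral_comp_abs fun x => ENNReal.ofReal ((1 + x) ^ (-κ)), hshift,
    ← ofReal_integral_eq_lintegral_ofReal (integrableOn_Ioi_rpow_of_lt hκ' one_pos),
    integral_Ioi_rpow_of_lt hκ' one_pos, Real.one_rpow, ← ENNReal.ofReal_ofNat 2,
    ← ENNReal.ofReal_mul zero_le_two]
  · congr 1
    rw [neg_div, ← div_neg, mul_one_div]
    ring_nf
  · filter_upwards [self_mem_ae_restrict measurableSet_Ioi] with x (hx : 1 < x)
    exact Real.rpow_nonneg (zero_le_one.trans hx.le) _

lemma lintegral_comp_log_mul_inv (g : ℝ → ℝ≥0∞) :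
    ∫⁻ t in Ioi 0, g (Real.log t) * ENNReal.ofReal t⁻¹ = ∫⁻ x, g x := by
  rw [← Real.range_exp, ← image_univ, lintegral_image_eq_lintegral_abs_deriv_mul MeasurableSet.univ
    (fun x _ => (Real.hasDerivAt_exp x).hasDerivWithinAt) Real.exp_injective.injOn,
    Measure.restrict_univ]
  refine lintegral_congr fun x => ?_
  rw [Real.log_exp, mul_left_comm, ← ENNReal.ofReal_mul (abs_nonneg _), Real.abs_exp,
    mul_inv_cancel₀ (Real.exp_ne_zero x), ENNReal.ofReal_one, mul_one]

variable {E : Type*} [NormedAddCommGroup E]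

lemma lintegral_enorm_le_of_log_weight {κ M : ℝ} (hκ : 1 < κ) {h : ℝ → E}
    (hh : ∀ t > 0, (1 + |Real.log t|) ^ κ * t * ‖h t‖ ≤ M) :
    ∫⁻ t in Ioi 0, ‖h t‖ₑ ≤ ENNReal.ofReal (2 / (κ - 1) * M) := by
  calc
    _ ≤ ∫⁻ t in Ioi 0, ENNReal.ofReal ((1 + |Real.log t|) ^ (-κ)) * ENNReal.ofReal t⁻¹ *
        ENNReal.ofReal M := by
      refine setLIntegral_mono' measurableSet_Ioi fun t (ht : 0 < t) => ?_
      rw [← ofReal_norm, ← ENNReal.ofReal_mul (by positivity), ← ENNReal.ofReal_mul (by positivity),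
        Real.rpow_neg (by positivity), ← mul_inv]
      exact ENNReal.ofReal_le_ofReal ((le_inv_mul_iff₀ (by positivity)).2 (hh t ht))
    _ = ENNReal.ofReal (2 / (κ - 1)) * ENNReal.ofReal M := by
      rw [lintegral_mul_const' _ _ ENNReal.ofReal_ne_top,
        lintegral_comp_log_mul_inv fun x => ENNReal.ofReal ((1 + |x|) ^ (-κ)),
        lintegral_one_add_abs_rpow_neg hκ]
    _ = _ := (ENNReal.ofReal_mul (div_nonneg zero_le_two (sub_nonneg.2 hκ.le))).symm

end LogWeight

section LogWeightedDeriv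

open Set Complex

variable {E : Type*} [NormedAddCommGroup E]

/-- The quantity whose supremum over `t > 0` is the `n`-th logarithmically weighted seminorm of
`F`; it is meaningful only for `t > 0`. -/
def logWeightedDeriv [NormedSpace ℝ E] (κ : ℝ) (n : ℕ) (F : ℝ → E) (t : ℝ) : ℝ :=
  (1 + |Real.log t|) ^ κ * t ^ n * ‖iteratedDeriv n F t‖

lemma iSup_logWeightedDeriv_nonneg [NormedSpace ℝ E] (κ : ℝ) (n : ℕ) (F : ℝ → E) :
    0 ≤ ⨆ t : Ioi (0 : ℝ), logWeightedDeriv κ n F t :=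
  Real.iSup_nonneg fun ⟨t, (ht : 0 < t)⟩ => by unfold logWeightedDeriv; positivity

lemma lintegral_enorm_zpow_smul_iteratedDeriv_le [NormedSpace ℝ E] {F : ℝ → E} {κ : ℝ}
    (hκ : 1 < κ) {n : ℕ}
    (hbdd : BddAbove (range fun t : Ioi (0 : ℝ) => logWeightedDeriv κ n F t)) :
    ∫⁻ t in Ioi 0, ‖t ^ (n - 1 : ℤ) • iteratedDeriv n F t‖ₑ ≤
      ENNReal.ofReal (2 / (κ - 1) * ⨆ t : Ioi (0 : ℝ), logWeightedDeriv κ n F t) := by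
  refine lintegral_enorm_le_of_log_weight hκ fun t ht => ?_
  have hpow : t * |t ^ (n - 1 : ℤ)| = t ^ n := by
    rw [abs_of_pos (zpow_pos ht _), ← zpow_one_add₀ ht.ne', add_sub_cancel, zpow_natCast]
  rw [norm_smul, Real.norm_eq_abs, mul_assoc, ← mul_assoc t, hpow, ← mul_assoc]
  exact le_ciSup hbdd ⟨t, ht⟩

theorem fourier_L1_bound_general [NormedSpace ℂ E] [CompleteSpace E] {F : ℝ → E} {κ : ℝ}
    (hκ : 1 < κ) (hF : IntegrableOn F (Ioi 0)) (hdiff : ContDiffOn ℝ 2 F (Ioi 0))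
    (hbdd : ∀ n < 3, BddAbove (range fun t : Ioi (0 : ℝ) => logWeightedDeriv κ n F t)) :
    ∫⁻ l : ℝ, ‖(√(2 * Real.pi) : ℂ)⁻¹ • ∫ t in Ioi (0 : ℝ), cexp (I * l * t) • F t‖ₑ ≤
      ENNReal.ofReal (8 / (√(2 * Real.pi) * (κ - 1)) *
        ∑ n ∈ Finset.range 3, ⨆ t : Ioi (0 : ℝ), logWeightedDeriv κ n F t) := by
  set S : ℕ → ℝ := fun n => ⨆ t : Ioi (0 : ℝ), logWeightedDeriv κ n F t
  have hS : ∀ n ∈ Finset.range 3, 0 ≤ 2 / (κ - 1) * S n := fun n _ =>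
    mul_nonneg (div_nonneg zero_le_two (sub_nonneg.2 hκ.le)) (iSup_logWeightedDeriv_nonneg κ n F)
  have hnorm : ‖(√(2 * Real.pi) : ℂ)⁻¹‖ₑ = ENNReal.ofReal (√(2 * Real.pi))⁻¹ := by
    rw [← ofReal_norm, norm_inv, norm_real, Real.norm_of_nonneg (Real.sqrt_nonneg _)]
  simp_rw [enorm_smul, hnorm]
  rw [lintegral_const_mul' _ _ ENNReal.ofReal_ne_top]
  calc
    _ ≤ ENNReal.ofReal (√(2 * Real.pi))⁻¹ * (4 * ∑ n ∈ Finset.range 3,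
          ∫⁻ t in Ioi 0, ‖t ^ (n - 1 : ℤ) • iteratedDeriv n F t‖ₑ) := by
      gcongr
      exact lintegral_enorm_setIntegral_cexp_smul_le_sum hF hdiff
    _ ≤ ENNReal.ofReal (√(2 * Real.pi))⁻¹ *
          (4 * ∑ n ∈ Finset.range 3, ENNReal.ofReal (2 / (κ - 1) * S n)) := by
      gcongr with n hn
      exact lintegral_enorm_zpow_smul_iteratedDeriv_le hκ (hbdd n (Finset.mem_range.1 hn))
    _ = ENNReal.ofReal ((√(2 * Real.pi))⁻¹ * (4 * ∑ n ∈ Finset.range 3, 2 / (κ - 1) * S n)) := by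
      rw [ENNReal.ofReal_mul (by positivity), ENNReal.ofReal_mul zero_le_four,
        ENNReal.ofReal_sum_of_nonneg hS, ENNReal.ofReal_ofNat]
    _ = _ := by
      rw [← Finset.mul_sum]
      field_simp
      ring_nf

end LogWeightedDeriv

lemma IsTestFun.bddAbove_range_logWeightedDeriv {F : ℝ → ℂ} (hF : IsTestFun F) (κ : ℝ) (n : ℕ) :
    BddAbove (Set.range fun t : Set.Ioi (0 : ℝ) => logWeightedDeriv κ n F t) := by
  obtain ⟨hsmooth, hcompact, hsupp⟩ := hF
  have hcont : ContinuousOn (logWeightedDeriv κ n F) (tsupport F) := by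
    have hD : Continuous (iteratedDeriv n F) :=
      hsmooth.continuous_iteratedDeriv n (by exact_mod_cast le_top)
    have hlog : ContinuousOn Real.log (tsupport F) :=
      Real.continuousOn_log.mono fun t ht => (hsupp ht).ne'
    have hpow : ContinuousOn (fun t => (1 + |Real.log t|) ^ κ) (tsupport F) :=
      ContinuousOn.rpow_const (by fun_prop) fun t _ => Or.inl (by positivity)
    unfold logWeightedDeriv
    fun_prop
  have hzero : ∀ t ∉ tsupport F, logWeightedDeriv κ n F t = 0 := fun t ht => by
    have hD : iteratedFDeriv ℝ n F t = 0 :=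
      Function.notMem_support.1 fun h => ht (support_iteratedFDeriv_subset n h)
    simp [logWeightedDeriv, iteratedDeriv, hD]
  obtain ⟨B, hB⟩ := hcompact.isCompact.bddAbove_image hcont
  refine ⟨max B 0, ?_⟩
  rintro _ ⟨t, rfl⟩
  by_cases ht : (t : ℝ) ∈ tsupport F
  · exact (hB ⟨t, ht, rfl⟩).trans (le_max_left _ _)
  · exact (hzero t ht).trans_le (le_max_right _ _)

/-- `L¹` bound on the inverse Fourier transform `(Φ* F)(λ) = (2π)^{-1/2}∫₀^∞ F(t)e^{iλt}dt`
of a test function `F` supported in `(0,∞)`, in terms of weighted sup-norms of `F`, `F'`,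
`F''`. -/
theorem fourier_L1_bound (κ : ℝ) (hκ : 2 < κ) :
    ∃ C : ℝ, ∀ F : ℝ → ℂ, IsTestFun F →
      ∫⁻ l : ℝ, ‖(Real.sqrt (2 * Real.pi) : ℂ)⁻¹ *
          ∫ t in Set.Ioi (0:ℝ), F t * Complex.exp (Complex.I * l * t)‖₊ ≤
        ENNReal.ofReal (C * ∑ n ∈ Finset.range 3,
          ⨆ t : Set.Ioi (0:ℝ),
            (1 + |Real.log (t : ℝ)|) ^ κ * (t : ℝ) ^ n * ‖iteratedDeriv n F (t : ℝ)‖) := by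
  refine ⟨8 / (√(2 * Real.pi) * (κ - 1)), fun F hF => ?_⟩
  simp_rw [mul_comm (F _)]
  exact fourier_L1_bound_general (one_lt_two.trans hκ)
    (hF.1.continuous.integrable_of_hasCompactSupport hF.2.1).integrableOn
    (contDiff_infty.1 hF.1 2).contDiffOn
    fun n _ => hF.bddAbove_range_logWeightedDeriv κ n
end
end

section
/- Let t₀ > 0, l ∈ ℕ, and λ ∈ ℝ with λ ≠ 0. Let f : [0, t₀] → ℂ be of class C^{l+1}. Then the following are equivalent: (i) ∫₀^{t₀ - t} (t₀ - t - s)^l f(s) ds = λ f(t) for all t ∈ (0, t₀); (ii) l! · f(t) = λ (-1)^{l+1} f^{(l+1)}(t₀ - t) for all t ∈ (0, t₀), and f(t₀) = f'(t₀) = ⋯ = f^{(l)}(t₀) = 0. -/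
open MeasureTheory intervalIntegral

noncomputable section

/-!
Integration by parts gives `∫ₐˣ (x - s) ^ (n + 1) g(s) ds = ∫ₐˣ (x - s) ^ n (n + 1) G(s) ds`, where
`G` is the primitive of `g` vanishing at `a`. By induction on `n`, with the fundamental theorem of
calculus as the base case and again in each step, the Volterra equation
`∫ₐˣ (x - s) ^ n g(s) ds = φ(x)` is therefore equivalent to the initial value problem
`n! g = φ⁽ⁿ⁺¹⁾`, `φ(a) = ⋯ = φ⁽ⁿ⁾(a) = 0`. The substitution `x = t₀ - t` turns the Hankel eigenvalue
equation into the Volterra equation with `g = f` and `φ(x) = λ f(t₀ - x)`.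
-/

open Set

variable {E : Type*} [NormedAddCommGroup E] [NormedSpace ℝ E]

open scoped Pointwise in
lemma iteratedDerivWithin_Icc_comp_const_sub (n : ℕ) (f : ℝ → E) (a b c x : ℝ) :
    iteratedDerivWithin n (fun y ↦ f (c - y)) (Icc a b) x =
      (-1 : ℝ) ^ n • iteratedDerivWithin n f (Icc (c - b) (c - a)) (c - x) := by
  have reflect_Icc : c +ᵥ -Icc a b = Icc (c - b) (c - a) := by
    simp [← image_vadd, sub_eq_add_neg, add_comm]
  rw [iteratedDerivWithin_comp_const_sub, reflect_Icc]

lemma continuousOn_primitive_of_continuousOn_Icc {a b : ℝ} {g : ℝ → E} (hab : a ≤ b)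
    (hg : ContinuousOn g (Icc a b)) : ContinuousOn (fun x ↦ ∫ s in a..x, g s) (Icc a b) := by
  rw [← uIcc_of_le hab] at hg ⊢
  exact continuousOn_primitive_interval' hg.intervalIntegrable left_mem_uIcc

section Primitive

variable [CompleteSpace E] {a b x : ℝ} {g φ : ℝ → E}

lemma hasDerivAt_primitive_of_mem_uIoo (hg : ContinuousOn g (uIcc a b)) (hx : x ∈ uIoo a b) :
    HasDerivAt (fun y ↦ ∫ s in a..y, g s) (g x) x := by
  have hx' : x ∈ uIcc a b := uIoo_subset_uIcc_self hx
  have hg_Ioo : ContinuousOn g (uIoo a b) := hg.mono uIoo_subset_uIcc_self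
  exact integral_hasDerivAt_right (hg.mono (uIcc_subset_uIcc_left hx')).intervalIntegrable
    (hg_Ioo.stronglyMeasurableAtFilter isOpen_Ioo x hx)
    (hg_Ioo.continuousAt (Ioo_mem_nhds hx.1 hx.2))

lemma eqOn_primitive_iff (hab : a < b) (hg : ContinuousOn g (Icc a b))
    (hφ : DifferentiableOn ℝ φ (Icc a b)) :
    EqOn (fun x ↦ ∫ s in a..x, g s) φ (Ioo a b) ↔
      EqOn g (derivWithin φ (Icc a b)) (Ioo a b) ∧ φ a = 0 := by
  have hg_uIcc : ContinuousOn g (uIcc a b) := by rwa [uIcc_of_le hab.le]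
  have hφ_deriv : ∀ x ∈ Ioo a b, HasDerivAt φ (derivWithin φ (Icc a b) x) x := fun x hx ↦
    (hφ x (Ioo_subset_Icc_self hx)).hasDerivWithinAt.hasDerivAt (Icc_mem_nhds hx.1 hx.2)
  constructor
  · intro h
    constructor
    · intro x hx
      have hg_deriv := hasDerivAt_primitive_of_mem_uIoo hg_uIcc (by rwa [uIoo_of_le hab.le])
      exact hg_deriv.unique
        ((hφ_deriv x hx).congr_of_eventuallyEq (h.eventuallyEq_of_mem (Ioo_mem_nhds hx.1 hx.2)))
    · have h_Icc := h.of_subset_closure (continuousOn_primitive_of_continuousOn_Icc hab.le hg)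
        hφ.continuousOn Ioo_subset_Icc_self (closure_Ioo hab.ne).ge
      simpa using (h_Icc (left_mem_Icc.2 hab.le)).symm
  · rintro ⟨h, hφa⟩ x hx
    have hsub : Icc a x ⊆ Icc a b := Icc_subset_Icc_right hx.2.le
    have hint := (hg.mono hsub).intervalIntegrable_of_Icc (μ := volume) hx.1.le
    have hderiv : ∀ y ∈ Ioo a x, HasDerivAt φ (g y) y := fun y hy ↦ by
      have hy' : y ∈ Ioo a b := ⟨hy.1, hy.2.trans hx.2⟩
      exact h hy' ▸ hφ_deriv y hy'
    simpa [hφa] using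
      integral_eq_sub_of_hasDerivAt_of_le hx.1.le (hφ.continuousOn.mono hsub) hderiv hint

lemma integral_sub_pow_succ_smul (hg : ContinuousOn g (uIcc a x)) (n : ℕ) :
    ∫ s in a..x, (x - s) ^ (n + 1) • g s =
      ∫ s in a..x, (x - s) ^ n • (n + 1) • ∫ r in a..s, g r := by
  have hpow : ∀ s, HasDerivAt (fun s ↦ (x - s) ^ (n + 1)) (-((n + 1) * (x - s) ^ n)) s :=
    fun s ↦ by simpa using ((hasDerivAt_id s).const_sub x).fun_pow (n + 1)
  rw [integral_smul_deriv_eq_deriv_smul_of_hasDerivAt (by fun_prop)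
    (continuousOn_primitive_interval' hg.intervalIntegrable left_mem_uIcc) (fun s _ ↦ hpow s)
    (fun s hs ↦ hasDerivAt_primitive_of_mem_uIoo hg hs)
    (Continuous.intervalIntegrable (by fun_prop) _ _) hg.intervalIntegrable]
  simp only [sub_self, integral_same, smul_zero, zero_pow n.succ_ne_zero, zero_smul, zero_sub,
    neg_smul, intervalIntegral.integral_neg, neg_neg]
  refine integral_congr fun s _ ↦ ?_
  module

theorem eqOn_integral_sub_pow_smul_iff (hab : a < b) (n : ℕ) (hg : ContinuousOn g (Icc a b))
    (hφ : ContDiffOn ℝ (n + 1) φ (Icc a b)) :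
    EqOn (fun x ↦ ∫ s in a..x, (x - s) ^ n • g s) φ (Ioo a b) ↔
      EqOn (n.factorial • g) (iteratedDerivWithin (n + 1) φ (Icc a b)) (Ioo a b) ∧
        ∀ k ≤ n, iteratedDerivWithin k φ (Icc a b) a = 0 := by
  induction n generalizing g with
  | zero =>
    simpa [iteratedDerivWithin_one] using
      eqOn_primitive_iff hab hg (hφ.differentiableOn (by simp))
  | succ n ih =>
    have hg_uIcc : ContinuousOn g (uIcc a b) := by rwa [uIcc_of_le hab.le]
    have hprim_cont : ContinuousOn (fun x ↦ (n + 1) • ∫ s in a..x, g s) (Icc a b) :=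
      (continuousOn_primitive_of_continuousOn_Icc hab.le hg).fun_const_smul _
    have by_parts_iff : EqOn (fun x ↦ ∫ s in a..x, (x - s) ^ (n + 1) • g s) φ (Ioo a b) ↔
        EqOn (fun x ↦ ∫ s in a..x, (x - s) ^ n • (n + 1) • ∫ r in a..s, g r) φ (Ioo a b) :=
      forall₂_congr fun x hx ↦ Eq.congr_left <| integral_sub_pow_succ_smul
        (hg_uIcc.mono (uIcc_subset_uIcc_left (Icc_subset_uIcc (Ioo_subset_Icc_self hx)))) n
    have primitive_factorial : (n.factorial • fun x ↦ (n + 1) • ∫ s in a..x, g s) =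
        fun x ↦ ∫ s in a..x, ((n + 1).factorial • g) s := by
      ext x
      simp [← Nat.cast_smul_eq_nsmul ℝ, Nat.factorial_succ, smul_smul, mul_comm]
    have hdiff : DifferentiableOn ℝ (iteratedDerivWithin (n + 1) φ (Icc a b)) (Icc a b) :=
      hφ.differentiableOn_iteratedDerivWithin (by norm_cast; omega) (uniqueDiffOn_Icc hab)
    rw [by_parts_iff, ih hprim_cont (hφ.of_le (by norm_cast; omega)), primitive_factorial,
      eqOn_primitive_iff hab (hg.const_smul _) hdiff, ← iteratedDerivWithin_succ]
    simp only [Nat.le_add_one_iff, or_imp, forall_and, forall_eq]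
    tauto

end Primitive

theorem hankel_power_kernel_eigenvalue_equation_general [CompleteSpace E] {R : Type*}
    [DivisionRing R] [Module R E] [SMulCommClass ℝ R E] [ContinuousConstSMul R E] {t₀ : ℝ}
    (ht₀ : 0 < t₀) (l : ℕ) {c : R} (hc : c ≠ 0) {f : ℝ → E}
    (hf : ContDiffOn ℝ (l + 1) f (Icc 0 t₀)) :
    (∀ t ∈ Ioo 0 t₀, ∫ s in 0..(t₀ - t), (t₀ - t - s) ^ l • f s = c • f t) ↔
      (∀ t ∈ Ioo 0 t₀, l.factorial • f t =
          c • (-1 : ℝ) ^ (l + 1) • iteratedDerivWithin (l + 1) f (Icc 0 t₀) (t₀ - t)) ∧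
        ∀ k ≤ l, iteratedDerivWithin k f (Icc 0 t₀) t₀ = 0 := by
  have reflect_mem : MapsTo (t₀ - ·) (Icc 0 t₀) (Icc 0 t₀) := fun t ht ↦ by
    simpa [and_comm] using ht
  have hφ : ContDiffOn ℝ (l + 1) (fun x ↦ f (t₀ - x)) (Icc 0 t₀) :=
    hf.comp (by fun_prop) reflect_mem
  have iteratedDeriv_reflect (k : ℕ) (hk : k ≤ l + 1) (x : ℝ) (hx : x ∈ Icc 0 t₀) :
      iteratedDerivWithin k (fun x ↦ c • f (t₀ - x)) (Icc 0 t₀) x =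
        c • (-1 : ℝ) ^ k • iteratedDerivWithin k f (Icc 0 t₀) (t₀ - x) := by
    rw [iteratedDerivWithin_fun_const_smul hx (uniqueDiffOn_Icc ht₀) c
      ((hφ x hx).of_le (by exact_mod_cast hk)), iteratedDerivWithin_Icc_comp_const_sub, sub_self,
      sub_zero]
  have volterra_iff : (∀ t ∈ Ioo 0 t₀, ∫ s in 0..(t₀ - t), (t₀ - t - s) ^ l • f s = c • f t) ↔
      EqOn (fun x ↦ ∫ s in 0..x, (x - s) ^ l • f s) (fun x ↦ c • f (t₀ - x)) (Ioo 0 t₀) := by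
    constructor <;> intro h t ht <;>
      simpa using @h (t₀ - t) (by simpa [and_comm] using ht)
  rw [volterra_iff, eqOn_integral_sub_pow_smul_iff ht₀ l hf.continuousOn (hφ.const_smul c)]
  refine and_congr (forall₂_congr fun t ht ↦ ?_) (forall₂_congr fun k hk ↦ ?_)
  · rw [iteratedDeriv_reflect _ le_rfl t (Ioo_subset_Icc_self ht), Pi.smul_apply]
  · rw [iteratedDeriv_reflect k (by omega) 0 (left_mem_Icc.2 ht₀.le), sub_zero]
    simp [hc]

/-- Equivalence of the eigenvalue equation for the Hankel operator with kernel
`(t₀ - t)^l` on `(0,t₀)` with a boundary-value problem for the differential equation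
`l! f(t) = λ(-1)^{l+1} f^{(l+1)}(t₀ - t)`. -/
theorem hankel_power_kernel_eigenvalue_equation (t₀ : ℝ) (ht₀ : 0 < t₀)
    (l : ℕ) (lam : ℝ) (hlam : lam ≠ 0) (f : ℝ → ℂ)
    (hf : ContDiffOn ℝ (l + 1) f (Set.Icc 0 t₀)) :
    ((∀ t ∈ Set.Ioo (0:ℝ) t₀,
        ∫ s in (0:ℝ)..(t₀ - t), (((t₀ - t - s) ^ l : ℝ) : ℂ) * f s = (lam : ℂ) * f t) ↔
      ((∀ t ∈ Set.Ioo (0:ℝ) t₀,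
          ((l.factorial : ℕ) : ℂ) * f t =
            (lam : ℂ) * (-1 : ℂ) ^ (l + 1) *
              iteratedDerivWithin (l + 1) f (Set.Icc 0 t₀) (t₀ - t)) ∧
        (∀ k ≤ l, iteratedDerivWithin k f (Set.Icc 0 t₀) t₀ = 0))) := by
  simpa [mul_assoc] using
    hankel_power_kernel_eigenvalue_equation_general ht₀ l hlam hf
end
end

section
/- Let t₀ > 0 and let H be the bounded self-adjoint operator on L²((0,∞)) given by (H f)(t) = ∫₀^{max(t₀ - t, 0)} f(s) ds (the Hankel operator with kernel h(t) = 1 for t ≤ t₀ and h(t) = 0 for t > t₀). Then the set of nonzero eigenvalues of H is exactly { t₀ / (2π(n - 3/4)) : n = 1, 2, … } ∪ { - t₀ / (2π(n - 1/4)) : n = 1, 2, … }; that is, a real number λ ≠ 0 admits a nonzero f ∈ L²((0,∞)) with H f = λ f if and only if λ = t₀/(2π(n - 3/4)) or λ = -t₀/(2π(n - 1/4)) for some positive integer n. -/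
open MeasureTheory

noncomputable section

/-! The primitive `K t = ∫₀ᵗ f` of an eigenfunction `f` for `λ ≠ 0` satisfies
`K' t = λ⁻¹ K (t₀ - t)` on `[0, t₀]` and `K 0 = 0`. The pair `(K t, K (t₀ - t))` therefore solves
the equation of a rotation with angular velocity `λ⁻¹`, so `K t = sin (λ⁻¹ t) K t₀`; at `t = t₀`
this forces `sin (λ⁻¹ t₀) = 1`, since otherwise `K`, and with it `f`, vanishes. Conversely, if
`sin (λ⁻¹ t₀) = 1`, then `cos (λ⁻¹ t)` truncated to `[0, t₀)` is an eigenfunction. -/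

open Set
open scoped ENNReal

variable {E : Type*} [NormedAddCommGroup E] [NormedSpace ℂ E]

section ReflectedEquation

variable {T : ℝ} {a : ℂ}

theorem eq_cos_smul_add_sin_smul_of_reflected_deriv {P : ℝ → E}
    (hP : ∀ t ∈ Icc 0 T, HasDerivWithinAt P (a • P (T - t)) (Icc 0 T) t) {t : ℝ}
    (ht : t ∈ Icc 0 T) :
    P t = Complex.cos (a * t) • P 0 + Complex.sin (a * t) • P T := by
  have hmaps : MapsTo (fun s => T - s) (Icc 0 T) (Icc 0 T) := fun _ =>
    sub_mem_Icc_zero_iff_right.2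
  have hQ : ∀ s ∈ Icc 0 T,
      HasDerivWithinAt (fun s => P (T - s)) (-(a • P s)) (Icc 0 T) s := fun s hs => by
    simpa [Function.comp_def] using
      (hP _ (hmaps hs)).scomp s ((hasDerivWithinAt_id s _).const_sub T) hmaps
  have hmul (z : ℂ) : HasDerivAt (fun z => a * z) a z := hasDerivAt_const_mul a
  have hcos (s : ℝ) : HasDerivWithinAt (fun s : ℝ => Complex.cos (a * s))
      (-Complex.sin (a * s) * a) (Icc 0 T) s := (hmul s).ccos.comp_ofReal.hasDerivWithinAt
  have hsin (s : ℝ) : HasDerivWithinAt (fun s : ℝ => Complex.sin (a * s))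
      (Complex.cos (a * s) * a) (Icc 0 T) s := (hmul s).csin.comp_ofReal.hasDerivWithinAt
  have const_of_deriv_zero : ∀ F : ℝ → E,
      (∀ s ∈ Icc 0 T, HasDerivWithinAt F 0 (Icc 0 T) s) → F t = F 0 := fun F hF =>
    constant_of_derivWithin_zero (fun s hs => (hF s hs).differentiableWithinAt)
      (fun s hs => (hF s (Ico_subset_Icc_self hs)).derivWithin
        (uniqueDiffOn_Icc (hs.1.trans_lt hs.2) s (Ico_subset_Icc_self hs))) t ht
  have cos_sub_sin : Complex.cos (a * t) • P t - Complex.sin (a * t) • P (T - t) = P 0 := by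
    simpa using const_of_deriv_zero
      (fun s => Complex.cos (a * s) • P s - Complex.sin (a * s) • P (T - s)) fun s hs =>
        (((hcos s).fun_smul (hP s hs)).fun_sub
          ((hsin s).fun_smul (hQ s hs))).congr_deriv (by module)
  have sin_add_cos : Complex.sin (a * t) • P t + Complex.cos (a * t) • P (T - t) = P T := by
    simpa using const_of_deriv_zero
      (fun s => Complex.sin (a * s) • P s + Complex.cos (a * s) • P (T - s)) fun s hs =>
        (((hsin s).fun_smul (hP s hs)).fun_add
          ((hcos s).fun_smul (hQ s hs))).congr_deriv (by module)
  calc P t = (Complex.sin (a * t) ^ 2 + Complex.cos (a * t) ^ 2) • P t := by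
        rw [Complex.sin_sq_add_cos_sq, one_smul]
    _ = Complex.cos (a * t) • (Complex.cos (a * t) • P t - Complex.sin (a * t) • P (T - t)) +
        Complex.sin (a * t) • (Complex.sin (a * t) • P t + Complex.cos (a * t) • P (T - t)) := by
      module
    _ = Complex.cos (a * t) • P 0 + Complex.sin (a * t) • P T := by rw [cos_sub_sin, sin_add_cos]

theorem hasDerivWithinAt_integral_of_reflected [CompleteSpace E] {f : ℝ → E}
    (hf : IntegrableOn f (Icc 0 T))
    (h : ∀ᵐ t, t ∈ Ioc 0 T → f t = a • ∫ s in (0 : ℝ)..T - t, f s) {t : ℝ} (ht : t ∈ Icc 0 T) :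
    HasDerivWithinAt (fun t => ∫ s in (0 : ℝ)..t, f s) (a • ∫ s in (0 : ℝ)..T - t, f s)
      (Icc 0 T) t := by
  have hT : 0 ≤ T := ht.1.trans ht.2
  have hcont : ContinuousOn (fun t => a • ∫ s in (0 : ℝ)..T - t, f s) (Icc 0 T) := by
    have hprim := intervalIntegral.continuousOn_primitive_interval (uIcc_of_le hT ▸ hf)
    rw [uIcc_of_le hT] at hprim
    exact (hprim.comp (continuousOn_const.sub continuousOn_id) fun _ =>
      sub_mem_Icc_zero_iff_right.2).const_smul a
  have : Fact (t ∈ Icc 0 T) := ⟨ht⟩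
  have hderiv := intervalIntegral.integral_hasDerivWithinAt_right (a := 0) (s := Icc 0 T)
    (t := Icc 0 T)
    ((hcont.mono (Icc_subset_Icc_right ht.2)).intervalIntegrable_of_Icc ht.1)
    (hcont.stronglyMeasurableAtFilter_nhdsWithin measurableSet_Icc t) (hcont t ht)
  have heq : ∀ u ∈ Icc 0 T,
      ∫ s in (0 : ℝ)..u, f s = ∫ s in (0 : ℝ)..u, a • ∫ r in (0 : ℝ)..T - s, f r := by
    intro u hu
    refine intervalIntegral.integral_congr_ae ?_
    filter_upwards [h] with s hs hmem
    rw [uIoc_of_le hu.1] at hmem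
    exact hs ⟨hmem.1, hmem.2.trans hu.2⟩
  exact hderiv.congr heq (heq t ht)

theorem integral_eq_zero_of_reflected [CompleteSpace E] {f : ℝ → E}
    (hf : IntegrableOn f (Icc 0 T))
    (h : ∀ᵐ t, t ∈ Ioc 0 T → f t = a • ∫ s in (0 : ℝ)..T - t, f s)
    (hsin : Complex.sin (a * T) ≠ 1) {t : ℝ} (ht : t ∈ Icc 0 T) :
    ∫ s in (0 : ℝ)..t, f s = 0 := by
  have hK : ∀ t ∈ Icc 0 T,
      ∫ s in (0 : ℝ)..t, f s = Complex.sin (a * t) • ∫ s in (0 : ℝ)..T, f s := fun t ht => by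
    simpa using eq_cos_smul_add_sin_smul_of_reflected_deriv
      (fun t ht => hasDerivWithinAt_integral_of_reflected hf h ht) ht
  have hKT : ∫ s in (0 : ℝ)..T, f s = 0 := by
    have hT := hK T (right_mem_Icc.2 (ht.1.trans ht.2))
    by_contra hne
    exact hsin (smul_left_injective ℂ hne (hT.symm.trans (one_smul ℂ _).symm))
  rw [hK t ht, hKT, smul_zero]

end ReflectedEquation

/-- The Hankel operator with kernel `1_{(0, T]}`, acting on functions on `(0, ∞)` rather than
on `L^p` classes; values at negative arguments carry no meaning. -/
def indicatorHankel (T : ℝ) (f : ℝ → E) (t : ℝ) : E :=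
  ∫ s in (0 : ℝ)..max (T - t) 0, f s

section IndicatorHankel

variable {T t : ℝ} {f g : ℝ → E}

theorem indicatorHankel_of_le (h : t ≤ T) :
    indicatorHankel T f t = ∫ s in (0 : ℝ)..T - t, f s := by
  rw [indicatorHankel, max_eq_left (sub_nonneg.2 h)]

theorem indicatorHankel_of_ge (h : T ≤ t) : indicatorHankel T f t = 0 := by
  rw [indicatorHankel, max_eq_right (sub_nonpos.2 h), intervalIntegral.integral_same]

theorem indicatorHankel_congr_ae (h : f =ᵐ[volume.restrict (Ioi 0)] g) :
    indicatorHankel T f = indicatorHankel T g := by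
  ext t
  refine intervalIntegral.integral_congr_ae ?_
  filter_upwards [(ae_restrict_iff' measurableSet_Ioi).1 h] with s hs hmem
  rw [uIoc_of_le (le_max_right _ _)] at hmem
  exact hs hmem.1

theorem sin_inv_mul_eq_one_of_indicatorHankel_eq_smul [CompleteSpace E] {lam : ℂ} (hlam : lam ≠ 0)
    (hf : IntegrableOn f (Icc 0 T)) (hf₀ : ¬ f =ᵐ[volume.restrict (Ioi 0)] 0)
    (h : indicatorHankel T f =ᵐ[volume.restrict (Ioi 0)] lam • f) :
    Complex.sin (lam⁻¹ * T) = 1 := by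
  have hfH : ∀ᵐ t, t ∈ Ioi 0 → f t = lam⁻¹ • indicatorHankel T f t := by
    rw [← ae_restrict_iff' measurableSet_Ioi]
    filter_upwards [h] with t ht
    rw [ht, Pi.smul_apply, inv_smul_smul₀ hlam]
  have hreflected : ∀ᵐ t, t ∈ Ioc 0 T → f t = lam⁻¹ • ∫ s in (0 : ℝ)..T - t, f s := by
    filter_upwards [hfH] with t ht hmem
    rw [ht hmem.1, indicatorHankel_of_le hmem.2]
  by_contra hsin
  refine hf₀ ((ae_restrict_iff' measurableSet_Ioi).2 ?_)
  filter_upwards [hfH] with t ht hpos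
  rw [ht hpos, Pi.zero_apply]
  rcases le_total t T with hle | hge
  · rw [indicatorHankel_of_le hle, integral_eq_zero_of_reflected hf hreflected hsin
      (sub_mem_Icc_zero_iff_right.2 ⟨hpos.le, hle⟩), smul_zero]
  · rw [indicatorHankel_of_ge hge, smul_zero]

end IndicatorHankel

/-- The wave `cos (a t) • v` cut off outside `[0, T)`, the candidate eigenfunction of
`indicatorHankel T` for the eigenvalue `a⁻¹`. The interval contains `0` so that the eigenvalue
equation can be evaluated there. -/
def truncatedCos (T : ℝ) (a : ℂ) (v : E) : ℝ → E :=
  (Ico 0 T).indicator fun s => Complex.cos (a * s) • v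

section TruncatedCos

variable {T : ℝ} {a : ℂ} {v : E}

theorem memLp_truncatedCos (p : ℝ≥0∞) {μ : Measure ℝ} [IsLocallyFiniteMeasure μ] :
    MemLp (truncatedCos T a v) p μ := by
  have hcont : Continuous fun s : ℝ => Complex.cos (a * s) • v := by fun_prop
  obtain ⟨C, hC⟩ := isCompact_Icc.exists_bound_of_continuousOn
    (hcont.continuousOn (s := Icc 0 T))
  have : IsFiniteMeasure (μ.restrict (Ico 0 T)) := ⟨by simp [measure_Ico_lt_top]⟩
  refine (memLp_indicator_iff_restrict measurableSet_Ico).2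
    (MemLp.of_bound hcont.aestronglyMeasurable C ?_)
  filter_upwards [ae_restrict_mem measurableSet_Ico] with s hs
  exact hC s (Ico_subset_Icc_self hs)

theorem indicatorHankel_truncatedCos [CompleteSpace E] (ha : a ≠ 0)
    (hsin : Complex.sin (a * T) = 1) {t : ℝ} (ht : 0 ≤ t) :
    indicatorHankel T (truncatedCos T a v) t = a⁻¹ • truncatedCos T a v t := by
  rcases le_or_gt T t with hge | hlt
  · rw [indicatorHankel_of_ge hge, truncatedCos, indicator_of_notMem fun h => hge.not_gt h.2,
      smul_zero]
  have hcos : Complex.cos (a * T) = 0 := by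
    simpa [hsin] using Complex.sin_sq_add_cos_sq (a * T)
  have hsin_sub : Complex.sin (a * (T - t)) = Complex.cos (a * t) := by
    rw [mul_sub, Complex.sin_sub, hsin, hcos, one_mul, zero_mul, sub_zero]
  have huncut : ∫ s in (0 : ℝ)..T - t, truncatedCos T a v s =
      ∫ s in (0 : ℝ)..T - t, Complex.cos (a * s) • v := by
    refine intervalIntegral.integral_congr_ae ?_
    filter_upwards [volume.ae_ne T] with s hsT hs
    rw [uIoc_of_le (sub_nonneg.2 hlt.le)] at hs
    have hmem : s ∈ Ico 0 T := ⟨hs.1.le, (hs.2.trans (sub_le_self T ht)).lt_of_ne hsT⟩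
    exact indicator_of_mem hmem _
  rw [indicatorHankel_of_le hlt.le, huncut, intervalIntegral.integral_smul_const,
    integral_cos_mul_complex ha, truncatedCos, indicator_of_mem (mem_Ico.2 ⟨ht, hlt⟩), smul_smul]
  simp [hsin_sub, div_eq_inv_mul]

theorem truncatedCos_not_ae_eq_zero [CompleteSpace E] (hT : 0 < T) (ha : a ≠ 0)
    (hsin : Complex.sin (a * T) = 1) (hv : v ≠ 0) :
    ¬ truncatedCos T a v =ᵐ[volume.restrict (Ioi 0)] 0 := by
  intro hzero
  have hHankel : indicatorHankel T (truncatedCos T a v) 0 = 0 := by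
    rw [indicatorHankel_congr_ae hzero]
    simp [indicatorHankel]
  rw [indicatorHankel_truncatedCos ha hsin le_rfl] at hHankel
  simp [truncatedCos, hT, ha, hv] at hHankel

end TruncatedCos

theorem exists_int_iff_exists_pos_nat {q : ℤ → Prop} :
    (∃ k, q k) ↔ ∃ n : ℕ, 1 ≤ n ∧ (q (n - 1) ∨ q (-n)) := by
  constructor
  · rintro ⟨k, hk⟩
    rcases le_or_gt 0 k with hnonneg | hneg
    · lift k to ℕ using hnonneg
      exact ⟨k + 1, by omega, Or.inl (by simpa using hk)⟩
    · exact ⟨k.natAbs, by omega, Or.inr (by rwa [Int.ofNat_natAbs_of_nonpos hneg.le, neg_neg])⟩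
  · rintro ⟨n, -, h | h⟩ <;> exact ⟨_, h⟩

theorem sin_inv_mul_eq_one_iff {T : ℝ} (hT : T ≠ 0) {lam : ℂ} :
    Complex.sin (lam⁻¹ * T) = 1 ↔
      ∃ n : ℕ, 1 ≤ n ∧ (lam = (T / (2 * Real.pi * (n - 3 / 4)) : ℝ) ∨
        lam = (-(T / (2 * Real.pi * (n - 1 / 4))) : ℝ)) := by
  have hsolve (c : ℂ) : c = lam⁻¹ * T ↔ lam = T / c := by
    rw [← inv_inj (a := lam), inv_div, eq_div_iff (Complex.ofReal_ne_zero.2 hT), eq_comm]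
  simp only [Complex.sin_eq_one_iff, hsolve, exists_int_iff_exists_pos_nat, ← div_neg]
  refine exists_congr fun n => and_congr_right fun _ => ?_
  congr! 3 <;> push_cast <;> ring

theorem hankel_indicator_kernel_eigenvalues_general [CompleteSpace E] [Nontrivial E] {p : ℝ≥0∞}
    (hp : 1 ≤ p) {t₀ : ℝ} (ht₀ : 0 < t₀)
    (H : Lp E p (volume.restrict (Ioi (0 : ℝ))) → Lp E p (volume.restrict (Ioi (0 : ℝ))))
    (hH : ∀ f, ∀ᵐ t ∂volume.restrict (Ioi (0 : ℝ)),
      H f t = ∫ s in (0 : ℝ)..max (t₀ - t) 0, f s) {lam : ℂ} (hlam : lam ≠ 0) :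
    (∃ f, f ≠ 0 ∧ H f = lam • f) ↔
      ∃ n : ℕ, 1 ≤ n ∧ (lam = (t₀ / (2 * Real.pi * (n - 3 / 4)) : ℝ) ∨
        lam = (-(t₀ / (2 * Real.pi * (n - 1 / 4))) : ℝ)) := by
  rw [← sin_inv_mul_eq_one_iff ht₀.ne']
  constructor
  · rintro ⟨f, hf₀, hf⟩
    have hint : IntegrableOn f (Icc 0 t₀) := by
      rw [integrableOn_Icc_iff_integrableOn_Ioc]
      exact ((Lp.memLp f).mono_measure
        (Measure.restrict_mono Ioc_subset_Ioi_self le_rfl)).integrable hp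
    refine sin_inv_mul_eq_one_of_indicatorHankel_eq_smul hlam hint
      (mt Lp.eq_zero_iff_ae_eq_zero.2 hf₀) ?_
    filter_upwards [hH f, Lp.coeFn_smul lam f] with t hHt hsmul
    rw [indicatorHankel, ← hHt, hf, hsmul]
  · intro hsin
    obtain ⟨v, hv⟩ := exists_ne (0 : E)
    have hmem := memLp_truncatedCos (T := t₀) (a := lam⁻¹) (v := v) p
      (μ := volume.restrict (Ioi (0 : ℝ)))
    refine ⟨hmem.toLp _, fun h₀ => truncatedCos_not_ae_eq_zero ht₀ (inv_ne_zero hlam) hsin hv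
      (hmem.coeFn_toLp.symm.trans (Lp.eq_zero_iff_ae_eq_zero.1 h₀)), Lp.ext ?_⟩
    filter_upwards [hH (hmem.toLp _), Lp.coeFn_smul lam (hmem.toLp _), hmem.coeFn_toLp,
      ae_restrict_mem measurableSet_Ioi] with t hHt hsmul hrep ht
    rw [hHt, hsmul, Pi.smul_apply, hrep, ← indicatorHankel,
      indicatorHankel_congr_ae hmem.coeFn_toLp,
      indicatorHankel_truncatedCos (inv_ne_zero hlam) hsin (mem_Ioi.1 ht).le, inv_inv]

/-- The nonzero eigenvalues of the Hankel operator with kernel `1_{(0,t₀]}`, i.e.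
`(Hf)(t) = ∫₀^{(t₀-t)₊} f(s) ds`, are exactly `t₀/(2π(n-3/4))` and `-t₀/(2π(n-1/4))`,
`n = 1, 2, …`. -/
theorem hankel_indicator_kernel_eigenvalues (t₀ : ℝ) (ht₀ : 0 < t₀)
    (H : Lp ℂ 2 (volume.restrict (Set.Ioi (0:ℝ))) →L[ℂ]
      Lp ℂ 2 (volume.restrict (Set.Ioi (0:ℝ))))
    (hH : ∀ f : Lp ℂ 2 (volume.restrict (Set.Ioi (0:ℝ))),
      ∀ᵐ t ∂(volume.restrict (Set.Ioi (0:ℝ))),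
        (H f : ℝ → ℂ) t = ∫ s in (0:ℝ)..(max (t₀ - t) 0), f s) :
    ∀ lam : ℝ, lam ≠ 0 →
      ((∃ f : Lp ℂ 2 (volume.restrict (Set.Ioi (0:ℝ))),
          f ≠ 0 ∧ H f = (lam : ℂ) • f) ↔
        ∃ n : ℕ, 1 ≤ n ∧
          (lam = t₀ / (2 * Real.pi * ((n : ℝ) - 3/4)) ∨
           lam = -(t₀ / (2 * Real.pi * ((n : ℝ) - 1/4))))) := by
  intro lam hlam
  exact_mod_cast hankel_indicator_kernel_eigenvalues_general one_le_two ht₀ H hH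
    (Complex.ofReal_ne_zero.2 hlam)
end
end

section
/- Let ν = 3 √(6/π) e^{-3/2}, let γ ∈ ℝ, and set h_γ(t) = t^{-1} - γ e^{-√t} for t > 0 (the Carleman kernel perturbed by -γ e^{-t^{1/2}}). If γ ≤ ν^{-1}, then Q_{h_γ}[f] ≥ 0 for all f ∈ C_c^∞((0,∞)). If γ > ν^{-1}, then N₋(Q_{h_γ}) = ∞, i.e. for every natural number N there is an N-dimensional complex subspace L ⊆ C_c^∞((0,∞)) with Q_{h_γ}[f] < 0 for every nonzero f ∈ L. -/
open MeasureTheory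
open scoped ComplexOrder

noncomputable section

/-- The Hankel quadratic form `Q_h[f] = ∫₀^∞∫₀^∞ h(t+s) f(s) conj(f(t)) ds dt`. -/
def hankelQF (h : ℝ → ℂ) (f : ℝ → ℂ) : ℂ :=
  ∫ t in Set.Ioi (0:ℝ), ∫ s in Set.Ioi (0:ℝ), h (t + s) * f s * (starRingEnd ℂ) (f t)

/-- There is an `N`-dimensional subspace of test functions on which `Q` is strictly negative. -/
def negSubspace (Q : (ℝ → ℂ) → ℂ) (N : ℕ) : Prop :=
  ∃ L : Submodule ℂ (ℝ → ℂ), (∀ f ∈ L, IsTestFun f) ∧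
    Module.finrank ℂ L = N ∧ ∀ f ∈ L, f ≠ 0 → Q f < 0

/-!
If `h` is the Laplace transform of `σ` on `(0,∞)`, then Fubini's theorem turns the Hankel form into
`Q_h[f] = ∫₀^∞ σ(x) |(Lf)(x)|² dx`, where `Lf` is the Laplace transform of `f`. It is nonnegative
when `σ` is.

Suppose instead that `σ < 0` near some `x₀ > 0`. Differentiating a test function and translating it
by `1/x₀` multiplies its Laplace transform by `x e^{-x/x₀}`, which has its strict maximum over
`(0,∞)` at `x₀`. After `n` such steps the Laplace transforms concentrate at `x₀`; by equivalence of
norms this is uniform over the finite-dimensional space of all `P(d/dt) f` with `deg P < N`, so the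
form is negative definite on the resulting space for `n` large.

The kernel `t⁻¹` is the Laplace transform of `1`, and `e^{-√t}` is the Laplace transform of
`(2√π)⁻¹ x^{-3/2} e^{-1/(4x)}`, whose maximum `ν` is attained at `x = 1/6`.
-/

open Set Filter Topology

/-! ### The density of `e^{-√t}` -/

/-- The increasing inverse `ℝ → (0,∞)` of the map `u ↦ u - b / u`, for `b > 0`. -/
def subDivInv (b v : ℝ) : ℝ :=
  (v + √(v ^ 2 + 4 * b)) / 2

section SubDivInv

variable {b : ℝ}

theorem subDivInv_pos (hb : 0 < b) (v : ℝ) : 0 < subDivInv b v := by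
  have hlt : |v| < √(v ^ 2 + 4 * b) := by
    rw [← Real.sqrt_sq_eq_abs]
    exact Real.sqrt_lt_sqrt (sq_nonneg v) (by linarith)
  rw [subDivInv]
  linarith [neg_abs_le v]

theorem subDivInv_sub_div (hb : 0 < b) (v : ℝ) : subDivInv b v - b / subDivInv b v = v := by
  have := (subDivInv_pos hb v).ne'
  have hsq : √(v ^ 2 + 4 * b) ^ 2 = v ^ 2 + 4 * b := Real.sq_sqrt (by positivity)
  field_simp
  rw [subDivInv]
  linarith

theorem range_subDivInv (hb : 0 < b) : range (subDivInv b) = Ioi 0 := by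
  refine Subset.antisymm (range_subset_iff.2 (subDivInv_pos hb)) fun u (hu : 0 < u) => ?_
  have hsqrt : √((u - b / u) ^ 2 + 4 * b) = u + b / u := by
    rw [← Real.sqrt_sq (by positivity : 0 ≤ u + b / u)]
    congr 1
    field_simp
    ring
  exact ⟨u - b / u, by rw [subDivInv, hsqrt]; ring⟩

theorem hasDerivAt_subDivInv (hb : 0 < b) (v : ℝ) :
    HasDerivAt (subDivInv b) (subDivInv b v / √(v ^ 2 + 4 * b)) v := by
  have hsqrt := (((hasDerivAt_id v).pow 2).add_const (4 * b)).sqrt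
    (by simp only [id, Pi.pow_apply]; positivity)
  refine (((hasDerivAt_id v).add hsqrt).div_const 2).congr_deriv ?_
  simp only [id, Pi.pow_apply, subDivInv]
  field_simp
  push_cast
  ring

theorem integral_Ioi_comp_sub_div_eq_integral_smul {E : Type*} [NormedAddCommGroup E]
    [NormedSpace ℝ E] (F : ℝ → E) (hb : 0 < b) :
    ∫ u in Ioi (0 : ℝ), F (u - b / u) = ∫ v, (subDivInv b v / √(v ^ 2 + 4 * b)) • F v := by
  have hinj : Function.Injective (subDivInv b) :=
    Function.LeftInverse.injective (g := fun u => u - b / u) (subDivInv_sub_div hb)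
  rw [← range_subDivInv hb, ← image_univ, integral_image_eq_integral_abs_deriv_smul
    MeasurableSet.univ (fun v _ => (hasDerivAt_subDivInv hb v).hasDerivWithinAt) hinj.injOn,
    setIntegral_univ]
  refine integral_congr_ae (ae_of_all _ fun v => ?_)
  have := subDivInv_pos hb v
  simp only [subDivInv_sub_div hb]
  rw [abs_of_nonneg (by positivity)]

/-- The derivative of the inverse of `u ↦ u - b / u` has values at `v` and `-v` adding up to `1`, so
an even integrand contributes half of its integral. -/
theorem integral_Ioi_comp_sub_div {E : Type*} [NormedAddCommGroup E] [NormedSpace ℝ E]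
    {F : ℝ → E} (hF : Integrable F) (heven : ∀ v, F (-v) = F v) (hb : 0 < b) :
    ∫ u in Ioi (0 : ℝ), F (u - b / u) = (2 : ℝ)⁻¹ • ∫ v, F v := by
  set w : ℝ → ℝ := fun v => subDivInv b v / √(v ^ 2 + 4 * b) with hw
  have hw_nonneg : ∀ v, 0 ≤ w v := fun v => by
    have := subDivInv_pos hb v
    positivity
  have hw_add : ∀ v, w v + w (-v) = 1 := fun v => by
    have : √(v ^ 2 + 4 * b) ≠ 0 := by positivity
    simp only [hw, subDivInv, neg_sq]
    field_simp
    ring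
  have hw_cont : Continuous w := by
    unfold w subDivInv
    fun_prop (disch := intro; positivity)
  have hint : Integrable fun v => w v • F v := by
    refine hF.bdd_smul 1 hw_cont.aestronglyMeasurable (ae_of_all _ fun v => ?_)
    rw [Real.norm_of_nonneg (hw_nonneg v)]
    linarith [hw_add v, hw_nonneg (-v)]
  rw [integral_Ioi_comp_sub_div_eq_integral_smul F hb, eq_inv_smul_iff₀ two_ne_zero, two_smul]
  nth_rw 2 [← integral_neg_eq_self]
  rw [← integral_add hint hint.comp_neg]
  exact integral_congr_ae (ae_of_all _ fun v => by simp only [heven, ← add_smul, hw_add, one_smul])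

end SubDivInv

/-- The density `σ` on `(0,∞)` whose Laplace transform is `t ↦ e^{-√t}`; the sign-function of this
kernel is `I_{1/2}(x) = σ(e^{-x})`. -/
def expSqrtDensity (x : ℝ) : ℝ :=
  (2 * √Real.pi)⁻¹ * x ^ (-(3 / 2) : ℝ) * Real.exp (-(1 / (4 * x)))

theorem expSqrtDensity_pos {x : ℝ} (hx : 0 < x) : 0 < expSqrtDensity x := by
  unfold expSqrtDensity
  positivity

theorem continuousAt_expSqrtDensity {x : ℝ} (hx : 0 < x) : ContinuousAt expSqrtDensity x := by
  unfold expSqrtDensity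
  have h4 : 4 * x ≠ 0 := by positivity
  have := Real.continuousAt_rpow_const x (-(3 / 2)) (Or.inl hx.ne')
  fun_prop (disch := assumption)

theorem expSqrtDensity_eq_rpow {x : ℝ} (hx : 0 < x) :
    expSqrtDensity x =
      3 * √(6 / Real.pi) * (1 / (6 * x) * Real.exp (-(1 / (6 * x)))) ^ (3 / 2 : ℝ) := by
  have h6 : (6 : ℝ) ^ (3 / 2 : ℝ) = 6 * √6 := by
    rw [show (3 / 2 : ℝ) = 1 + 1 / 2 by norm_num, Real.rpow_add (by norm_num), Real.rpow_one,
      Real.sqrt_eq_rpow]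
  rw [expSqrtDensity, Real.mul_rpow (by positivity) (Real.exp_nonneg _), ← Real.exp_mul,
    Real.rpow_neg hx.le, one_div (6 * x), Real.inv_rpow (by positivity),
    Real.mul_rpow (by norm_num) hx.le, h6, Real.sqrt_div (by norm_num),
    show -(6 * x)⁻¹ * (3 / 2) = -(1 / (4 * x)) by field_simp; norm_num]
  have := Real.sqrt_pos.2 Real.pi_pos
  field_simp
  norm_num

theorem expSqrtDensity_one_sixth :
    expSqrtDensity (1 / 6) = 3 * √(6 / Real.pi) * Real.exp (-(3 / 2)) := by
  rw [expSqrtDensity_eq_rpow (by norm_num)]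
  norm_num [← Real.exp_mul]

theorem expSqrtDensity_le {x : ℝ} (hx : 0 < x) : expSqrtDensity x ≤ expSqrtDensity (1 / 6) := by
  rw [expSqrtDensity_eq_rpow hx, expSqrtDensity_eq_rpow (by norm_num)]
  gcongr 3 * √(6 / Real.pi) * ?_ ^ (3 / 2 : ℝ)
  exact (Real.mul_exp_neg_le_exp_neg_one _).trans_eq (by norm_num)

theorem exp_neg_mul_expSqrtDensity_rpow_neg_two {t y : ℝ} (ht : 0 ≤ t) (hy : 0 < y) :
    2 * y ^ (-3 : ℝ) * (Real.exp (-(t * y ^ (-2 : ℝ))) * expSqrtDensity (y ^ (-2 : ℝ))) =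
      (√Real.pi)⁻¹ * Real.exp (-√t) * Real.exp (-(1 / 2 * y - √t / 2 / (1 / 2 * y)) ^ 2) := by
  have hexp : Real.exp (-(t * (y ^ 2)⁻¹)) * Real.exp (-(1 / (4 * (y ^ 2)⁻¹))) =
      Real.exp (-√t) * Real.exp (-(1 / 2 * y - √t / 2 / (1 / 2 * y)) ^ 2) := by
    rw [← Real.exp_add, ← Real.exp_add]
    congr 1
    field_simp
    linear_combination 16 * Real.sq_sqrt ht
  have hpow : (y ^ (-2 : ℝ)) ^ (-(3 / 2) : ℝ) = y ^ (3 : ℝ) := by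
    rw [← Real.rpow_mul hy.le]; norm_num
  have h2 : y ^ (-2 : ℝ) = (y ^ 2)⁻¹ := by rw [Real.rpow_neg hy.le]; norm_num
  have h3 : y ^ (3 : ℝ) ≠ 0 := by positivity
  rw [mul_assoc (√Real.pi)⁻¹, ← hexp, expSqrtDensity, hpow, Real.rpow_neg hy.le, h2]
  field_simp

theorem integral_exp_neg_mul_expSqrtDensity {t : ℝ} (ht : 0 < t) :
    ∫ x in Ioi (0 : ℝ), Real.exp (-(t * x)) * expSqrtDensity x = Real.exp (-√t) := by
  set b := √t / 2
  have hgauss : Integrable fun v : ℝ => Real.exp (-v ^ 2) := by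
    simpa using integrable_exp_neg_mul_sq one_pos
  have hgauss_integral : ∫ v : ℝ, Real.exp (-v ^ 2) = √Real.pi := by
    simpa using integral_gaussian 1
  have hpi : √Real.pi ≠ 0 := by positivity
  calc ∫ x in Ioi (0 : ℝ), Real.exp (-(t * x)) * expSqrtDensity x
      = ∫ y in Ioi (0 : ℝ), 2 * y ^ (-3 : ℝ) *
          (Real.exp (-(t * y ^ (-2 : ℝ))) * expSqrtDensity (y ^ (-2 : ℝ))) := by
        rw [← integral_comp_rpow_Ioi _ (by norm_num : (-2 : ℝ) ≠ 0)]
        norm_num [smul_eq_mul]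
    _ = ∫ y in Ioi (0 : ℝ), (√Real.pi)⁻¹ * Real.exp (-√t) *
          Real.exp (-(1 / 2 * y - b / (1 / 2 * y)) ^ 2) :=
        setIntegral_congr_fun measurableSet_Ioi fun y hy =>
          exp_neg_mul_expSqrtDensity_rpow_neg_two ht.le hy
    _ = (√Real.pi)⁻¹ * Real.exp (-√t) *
          (2 * ∫ u in Ioi (0 : ℝ), Real.exp (-(u - b / u) ^ 2)) := by
        rw [integral_const_mul, integral_comp_mul_left_Ioi
          (fun u => Real.exp (-(u - b / u) ^ 2)) 0 (by norm_num : (0 : ℝ) < 1 / 2)]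
        norm_num
    _ = Real.exp (-√t) := by
        rw [integral_Ioi_comp_sub_div (F := fun v => Real.exp (-v ^ 2)) hgauss (by simp)
          (by positivity), hgauss_integral, smul_eq_mul]
        field_simp

/-! ### The Laplace transform and its diagonalization of Hankel forms -/

/-- The one-sided Laplace transform at real points. -/
def laplaceTransform {E : Type*} [NormedAddCommGroup E] [NormedSpace ℝ E] (f : ℝ → E) (x : ℝ) : E :=
  ∫ t in Ioi (0 : ℝ), Real.exp (-(x * t)) • f t

section LaplaceTransform

variable {E : Type*} [NormedAddCommGroup E] [NormedSpace ℝ E] {f : ℝ → E}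

theorem stronglyMeasurable_laplaceTransform (hf : StronglyMeasurable f) :
    StronglyMeasurable (laplaceTransform f) := by
  have hexp : Measurable fun z : ℝ × ℝ => Real.exp (-(z.1 * z.2)) := by fun_prop
  exact StronglyMeasurable.integral_prod_right
    (hexp.stronglyMeasurable.smul (hf.comp_measurable measurable_snd))

theorem norm_laplaceTransform_le_mul_exp (hf : IntegrableOn f (Ioi 0)) {a x : ℝ} (hx : 0 ≤ x)
    (hle : ∀ t > 0, f t ≠ 0 → a ≤ t) :
    ‖laplaceTransform f x‖ ≤ (∫ t in Ioi (0 : ℝ), ‖f t‖) * Real.exp (-(x * a)) := by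
  rw [← integral_mul_const]
  refine norm_integral_le_of_norm_le (hf.norm.mul_const _) ?_
  filter_upwards [ae_restrict_mem measurableSet_Ioi] with t ht
  rw [norm_smul, Real.norm_of_nonneg (Real.exp_nonneg _), mul_comm]
  by_cases hft : f t = 0
  · simp [hft]
  · gcongr
    exact hle t ht hft

theorem norm_laplaceTransform_le (hf : IntegrableOn f (Ioi 0)) {x : ℝ} (hx : 0 ≤ x) :
    ‖laplaceTransform f x‖ ≤ ∫ t in Ioi (0 : ℝ), ‖f t‖ := by
  simpa using norm_laplaceTransform_le_mul_exp hf hx fun t ht _ => ht.le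

theorem laplaceTransform_ofReal (f : ℝ → ℝ) (x : ℝ) :
    laplaceTransform (fun t => (f t : ℂ)) x = (laplaceTransform f x : ℝ) := by
  rw [laplaceTransform, laplaceTransform, ← integral_complex_ofReal]
  congr with t
  rw [Complex.real_smul, smul_eq_mul, Complex.ofReal_mul]

variable {𝕜 : Type*} [RCLike 𝕜]

theorem laplaceTransform_const_smul (c : 𝕜) (f : ℝ → 𝕜) (x : ℝ) :
    laplaceTransform (c • f) x = c • laplaceTransform f x := by
  simp only [laplaceTransform, Pi.smul_apply, smul_comm _ c, integral_smul]

theorem laplaceTransform_conj (f : ℝ → 𝕜) (x : ℝ) :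
    laplaceTransform (fun t => (starRingEnd 𝕜) (f t)) x =
      (starRingEnd 𝕜) (laplaceTransform f x) := by
  rw [laplaceTransform, laplaceTransform, ← integral_conj]
  congr with t
  simp only [RCLike.real_smul_eq_coe_mul, map_mul, RCLike.conj_ofReal]

theorem integral_laplaceTransform_mul {u v : ℝ → 𝕜} (hu : IntegrableOn u (Ioi 0))
    (hv : IntegrableOn v (Ioi 0)) :
    ∫ t in Ioi (0 : ℝ), laplaceTransform u t * v t =
      ∫ x in Ioi (0 : ℝ), u x * laplaceTransform v x := by
  set μ : Measure ℝ := volume.restrict (Ioi 0) with hμ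
  have hint : Integrable (Function.uncurry fun t x => (Real.exp (-(t * x)) • u x) * v t)
      (μ.prod μ) := by
    have hexp : Measurable fun z : ℝ × ℝ => Real.exp (-(z.1 * z.2)) := by fun_prop
    refine ((hv.mul_prod hu).bdd_smul 1 hexp.aestronglyMeasurable ?_).congr
      (ae_of_all _ fun z => ?_)
    · rw [Measure.prod_restrict]
      filter_upwards [ae_restrict_mem (measurableSet_Ioi.prod measurableSet_Ioi)] with z hz
      rw [Real.norm_of_nonneg (Real.exp_nonneg _), Real.exp_le_one_iff]
      exact neg_nonpos.2 (mul_nonneg (mem_Ioi.1 hz.1).le (mem_Ioi.1 hz.2).le)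
    · simp only [Function.uncurry_def, Pi.smul_apply', smul_mul_assoc, mul_comm (v z.1)]
  calc ∫ t, laplaceTransform u t * v t ∂μ
      = ∫ t, ∫ x, (Real.exp (-(t * x)) • u x) * v t ∂μ ∂μ := by
        simp only [laplaceTransform, hμ, integral_mul_const]
    _ = ∫ x, ∫ t, (Real.exp (-(t * x)) • u x) * v t ∂μ ∂μ := integral_integral_swap hint
    _ = ∫ x, u x * laplaceTransform v x ∂μ := by
        simp only [laplaceTransform, ← integral_const_mul, hμ]
        congr with x
        congr with t
        rw [mul_comm t x, smul_mul_assoc, mul_smul_comm]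

end LaplaceTransform

/-- `σ` is a density of `h` on the half-line, in the sense that `h(t) = ∫₀^∞ e^{-tx} σ(x) dx` for
`t > 0`: up to the substitution `x = e^{-ξ}`, `σ` is the sign-function of the Hankel kernel `h`. -/
structure HasLaplaceDensity (h σ : ℝ → ℝ) : Prop where
  integrableOn : ∀ t > 0, IntegrableOn (fun x => Real.exp (-(t * x)) * σ x) (Ioi 0)
  eq_laplaceTransform : ∀ t > 0, h t = laplaceTransform σ t

namespace HasLaplaceDensity

variable {h h₁ h₂ σ σ₁ σ₂ : ℝ → ℝ} {f : ℝ → ℂ}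

theorem sub (hσ₁ : HasLaplaceDensity h₁ σ₁) (hσ₂ : HasLaplaceDensity h₂ σ₂) :
    HasLaplaceDensity (fun t => h₁ t - h₂ t) (fun x => σ₁ x - σ₂ x) where
  integrableOn t ht := by
    simp only [mul_sub]
    exact Integrable.sub (hσ₁.integrableOn t ht) (hσ₂.integrableOn t ht)
  eq_laplaceTransform t ht := by
    simp only [hσ₁.eq_laplaceTransform t ht, hσ₂.eq_laplaceTransform t ht, laplaceTransform,
      smul_eq_mul, mul_sub]
    exact (integral_sub (hσ₁.integrableOn t ht) (hσ₂.integrableOn t ht)).symm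

theorem const_mul (hσ : HasLaplaceDensity h σ) (c : ℝ) :
    HasLaplaceDensity (fun t => c * h t) (fun x => c * σ x) where
  integrableOn t ht := by
    simp only [mul_left_comm _ c]
    exact (hσ.integrableOn t ht).const_mul c
  eq_laplaceTransform t ht := by
    simp only [hσ.eq_laplaceTransform t ht, laplaceTransform, smul_eq_mul, mul_left_comm _ c]
    exact (integral_const_mul c _).symm

theorem aestronglyMeasurable (hσ : HasLaplaceDensity h σ) :
    AEStronglyMeasurable σ (volume.restrict (Ioi 0)) := by
  have hexp : Measurable fun x : ℝ => Real.exp x := Real.measurable_exp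
  refine (hexp.aestronglyMeasurable.mul
    (hσ.integrableOn 1 one_pos).aestronglyMeasurable).congr (ae_of_all _ fun x => ?_)
  simp only [Pi.mul_apply, one_mul, ← mul_assoc, ← Real.exp_add, add_neg_cancel, Real.exp_zero]

theorem integral_add_mul (hσ : HasLaplaceDensity h σ) (hf : IntegrableOn f (Ioi 0)) {t : ℝ}
    (ht : 0 < t) :
    ∫ s in Ioi (0 : ℝ), (h (t + s) : ℂ) * f s =
      laplaceTransform (fun x => (σ x : ℂ) * laplaceTransform f x) t := by
  have hshift : ∀ s > 0, h (t + s) = laplaceTransform (fun x => Real.exp (-(t * x)) * σ x) s := by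
    intro s hs
    rw [hσ.eq_laplaceTransform (t + s) (by positivity)]
    refine integral_congr_ae (ae_of_all _ fun x => ?_)
    simp only [smul_eq_mul]
    rw [← mul_assoc, ← Real.exp_add, add_comm t s, add_mul, neg_add]
  have hint : IntegrableOn (fun x => ((Real.exp (-(t * x)) * σ x : ℝ) : ℂ)) (Ioi 0) :=
    Integrable.ofReal (hσ.integrableOn t ht)
  calc ∫ s in Ioi (0 : ℝ), (h (t + s) : ℂ) * f s
      = ∫ s in Ioi (0 : ℝ),
          laplaceTransform (fun x => ((Real.exp (-(t * x)) * σ x : ℝ) : ℂ)) s * f s :=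
        setIntegral_congr_fun measurableSet_Ioi fun s hs => by
          simp only [laplaceTransform_ofReal, hshift s hs]
    _ = ∫ x in Ioi (0 : ℝ), ((Real.exp (-(t * x)) * σ x : ℝ) : ℂ) * laplaceTransform f x :=
        integral_laplaceTransform_mul hint hf
    _ = laplaceTransform (fun x => (σ x : ℂ) * laplaceTransform f x) t := by
        simp only [laplaceTransform, Complex.real_smul, Complex.ofReal_mul, mul_assoc]

end HasLaplaceDensity

namespace IsTestFun

variable {f : ℝ → ℂ}

theorem stronglyMeasurable (hf : IsTestFun f) : StronglyMeasurable f :=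
  hf.1.continuous.stronglyMeasurable

theorem integrable (hf : IsTestFun f) : Integrable f :=
  hf.1.continuous.integrable_of_hasCompactSupport hf.2.1

theorem exists_pos_le (hf : IsTestFun f) : ∃ a > 0, ∀ t, f t ≠ 0 → a ≤ t := by
  rcases (tsupport f).eq_empty_or_nonempty with h | h
  · exact ⟨1, one_pos, fun t ht => absurd (congrFun (tsupport_eq_empty_iff.1 h) t) ht⟩
  · obtain ⟨a, ha, hle⟩ := hf.2.1.isCompact.exists_isLeast h
    exact ⟨a, hf.2.2 ha, fun t ht => hle (subset_tsupport f ht)⟩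

theorem eq_zero_of_nonpos (hf : IsTestFun f) {t : ℝ} (ht : t ≤ 0) : f t = 0 :=
  image_eq_zero_of_notMem_tsupport fun h => ht.not_gt (hf.2.2 h)

end IsTestFun

namespace HasLaplaceDensity

variable {h σ : ℝ → ℝ} {f : ℝ → ℂ}

theorem integrableOn_mul_laplaceTransform (hσ : HasLaplaceDensity h σ) (hf : IsTestFun f) :
    IntegrableOn (fun x => (σ x : ℂ) * laplaceTransform f x) (Ioi 0) := by
  obtain ⟨a, ha, hle⟩ := hf.exists_pos_le
  refine ((hσ.integrableOn a ha).norm.const_mul (∫ t in Ioi (0 : ℝ), ‖f t‖)).mono'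
    ((Complex.continuous_ofReal.comp_aestronglyMeasurable hσ.aestronglyMeasurable).mul
      (stronglyMeasurable_laplaceTransform hf.stronglyMeasurable).aestronglyMeasurable) ?_
  filter_upwards [ae_restrict_mem measurableSet_Ioi] with x hx
  rw [norm_mul, norm_mul, Complex.norm_real, Real.norm_of_nonneg (Real.exp_nonneg _), mul_comm a]
  calc ‖σ x‖ * ‖laplaceTransform f x‖
      ≤ ‖σ x‖ * ((∫ t in Ioi (0 : ℝ), ‖f t‖) * Real.exp (-(x * a))) := by
        gcongr
        exact norm_laplaceTransform_le_mul_exp hf.integrable.integrableOn hx.le fun t _ => hle t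
    _ = (∫ t in Ioi (0 : ℝ), ‖f t‖) * (Real.exp (-(x * a)) * ‖σ x‖) := by ring

theorem integrableOn_mul_norm_sq_laplaceTransform (hσ : HasLaplaceDensity h σ) (hf : IsTestFun f) :
    IntegrableOn (fun x => σ x * ‖laplaceTransform f x‖ ^ 2) (Ioi 0) := by
  refine ((hσ.integrableOn_mul_laplaceTransform hf).norm.mul_const
    (∫ t in Ioi (0 : ℝ), ‖f t‖)).mono' (hσ.aestronglyMeasurable.mul ?_) ?_
  · have := stronglyMeasurable_laplaceTransform hf.stronglyMeasurable
    exact (this.norm.pow 2).aestronglyMeasurable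
  filter_upwards [ae_restrict_mem measurableSet_Ioi] with x hx
  rw [norm_mul, norm_mul, Complex.norm_real, norm_pow, norm_norm, sq, mul_assoc]
  gcongr
  exact norm_laplaceTransform_le hf.integrable.integrableOn hx.le

theorem hankelQF_eq_integral (hσ : HasLaplaceDensity h σ) (hf : IsTestFun f) :
    hankelQF (fun t => (h t : ℂ)) f =
      ((∫ x in Ioi (0 : ℝ), σ x * ‖laplaceTransform f x‖ ^ 2 : ℝ) : ℂ) := by
  have hconj : IntegrableOn (fun t => (starRingEnd ℂ) (f t)) (Ioi 0) :=
    (Complex.conjCLE.toContinuousLinearMap.integrable_comp hf.integrable).integrableOn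
  calc hankelQF (fun t => (h t : ℂ)) f
      = ∫ t in Ioi (0 : ℝ), laplaceTransform (fun x => (σ x : ℂ) * laplaceTransform f x) t *
          (starRingEnd ℂ) (f t) :=
        setIntegral_congr_fun measurableSet_Ioi fun t ht => by
          simp only [integral_mul_const, hσ.integral_add_mul hf.integrable.integrableOn ht]
    _ = ∫ x in Ioi (0 : ℝ), (σ x : ℂ) * laplaceTransform f x *
          (starRingEnd ℂ) (laplaceTransform f x) := by
        simp only [integral_laplaceTransform_mul (hσ.integrableOn_mul_laplaceTransform hf) hconj,
          laplaceTransform_conj]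
    _ = ((∫ x in Ioi (0 : ℝ), σ x * ‖laplaceTransform f x‖ ^ 2 : ℝ) : ℂ) := by
        rw [← integral_complex_ofReal]
        congr with x
        rw [mul_assoc, Complex.mul_conj']
        push_cast
        rfl

theorem hankelQF_nonneg (hσ : HasLaplaceDensity h σ) (hnonneg : ∀ x > 0, 0 ≤ σ x)
    (hf : IsTestFun f) : 0 ≤ hankelQF (fun t => (h t : ℂ)) f := by
  rw [hσ.hankelQF_eq_integral hf, Complex.zero_le_real]
  exact setIntegral_nonneg measurableSet_Ioi fun x hx => mul_nonneg (hnonneg x hx) (by positivity)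

end HasLaplaceDensity

/-! ### Test functions with prescribed Laplace transforms -/

namespace IsTestFun

variable {f g : ℝ → ℂ}

protected theorem zero : IsTestFun 0 :=
  ⟨contDiff_const, HasCompactSupport.zero, by simp⟩

protected theorem add (hf : IsTestFun f) (hg : IsTestFun g) : IsTestFun (f + g) :=
  ⟨hf.1.add hg.1, hf.2.1.add hg.2.1, (tsupport_add f g).trans (union_subset hf.2.2 hg.2.2)⟩

protected theorem const_smul (hf : IsTestFun f) (c : ℂ) : IsTestFun (c • f) :=
  ⟨hf.1.const_smul c, hf.2.1.smul_left (f := fun _ => c),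
    (tsupport_smul_subset_right (fun _ => c) f).trans hf.2.2⟩

protected theorem differentiable (hf : IsTestFun f) : Differentiable ℝ f :=
  hf.1.differentiable (by simp)

protected theorem deriv (hf : IsTestFun f) : IsTestFun (deriv f) :=
  ⟨(contDiff_infty_iff_deriv.1 hf.1).2, hf.2.1.deriv, tsupport_deriv_subset.trans hf.2.2⟩

theorem comp_sub_right (hf : IsTestFun f) {a : ℝ} (ha : 0 ≤ a) : IsTestFun fun t => f (t - a) := by
  refine ⟨hf.1.comp (contDiff_id.sub contDiff_const),
    hf.2.1.comp_homeomorph (Homeomorph.subRight a), fun t ht => ?_⟩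
  have hmem : t - a ∈ tsupport f := by
    rwa [show (fun t => f (t - a)) = f ∘ Homeomorph.subRight a from rfl,
      tsupport_comp_eq_preimage] at ht
  exact ha.trans_lt (sub_pos.1 (hf.2.2 hmem))

theorem integrable_mul (hf : IsTestFun f) {w : ℝ → ℂ} (hw : Continuous w) :
    Integrable fun t => w t * f t :=
  (hw.mul hf.1.continuous).integrable_of_hasCompactSupport hf.2.1.mul_left

theorem laplaceTransform_eq_integral (hf : IsTestFun f) (x : ℝ) :
    laplaceTransform f x = ∫ t, (Real.exp (-(x * t)) : ℂ) * f t := by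
  simp only [laplaceTransform, Complex.real_smul]
  exact setIntegral_eq_integral_of_forall_compl_eq_zero fun _ ht => by
    rw [hf.eq_zero_of_nonpos (notMem_Ioi.1 ht), mul_zero]

theorem laplaceTransform_add (hf : IsTestFun f) (hg : IsTestFun g) (x : ℝ) :
    laplaceTransform (f + g) x = laplaceTransform f x + laplaceTransform g x := by
  have hexp : Continuous fun t : ℝ => (Real.exp (-(x * t)) : ℂ) := by fun_prop
  simp only [hf.laplaceTransform_eq_integral, hg.laplaceTransform_eq_integral,
    (hf.add hg).laplaceTransform_eq_integral, Pi.add_apply, mul_add,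
    integral_add (hf.integrable_mul hexp) (hg.integrable_mul hexp)]

theorem laplaceTransform_deriv (hf : IsTestFun f) (x : ℝ) :
    laplaceTransform (deriv f) x = x * laplaceTransform f x := by
  have hexp (t : ℝ) :
      HasDerivAt (fun t => (Real.exp (-(x * t)) : ℂ)) (-x * Real.exp (-(x * t)) : ℝ) t := by
    simpa [mul_comm] using (((hasDerivAt_id t).const_mul x).neg.exp).ofReal_comp
  rw [hf.deriv.laplaceTransform_eq_integral, hf.laplaceTransform_eq_integral,
    integral_mul_deriv_eq_deriv_mul_of_integrable (fun t _ => hexp t)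
      (fun t _ => (hf.differentiable t).hasDerivAt) (hf.deriv.integrable_mul (by fun_prop))
      (hf.integrable_mul (by fun_prop)) (hf.integrable_mul (by fun_prop)),
    ← integral_neg, ← integral_const_mul]
  congr with t
  push_cast
  ring

theorem laplaceTransform_comp_sub_right (hf : IsTestFun f) {a : ℝ} (ha : 0 ≤ a) (x : ℝ) :
    laplaceTransform (fun t => f (t - a)) x = Real.exp (-(x * a)) * laplaceTransform f x := by
  rw [(hf.comp_sub_right ha).laplaceTransform_eq_integral, hf.laplaceTransform_eq_integral,
    ← integral_add_right_eq_self _ a, ← integral_const_mul]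
  congr with t
  rw [add_sub_cancel_right, ← mul_assoc, ← Complex.ofReal_mul, ← Real.exp_add]
  ring_nf

end IsTestFun

/-- The complex vector space `C_c^∞((0,∞))`. -/
def testFunctions : Submodule ℂ (ℝ → ℂ) where
  carrier := {f | IsTestFun f}
  zero_mem' := IsTestFun.zero
  add_mem' := IsTestFun.add
  smul_mem' c _ hf := hf.const_smul c

namespace testFunctions

/-- Differentiation on `C_c^∞((0,∞))`; the Laplace transform turns it into multiplication by the
variable. -/
def derivative : Module.End ℂ testFunctions where
  toFun f := ⟨deriv f, f.2.deriv⟩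
  map_add' f g := Subtype.ext <| funext fun t =>
    deriv_add (f.2.differentiable t) (g.2.differentiable t)
  map_smul' c f := Subtype.ext <| funext fun t => deriv_const_smul c (f.2.differentiable t)

/-- The Laplace transform at the point `x`, as a linear functional on `C_c^∞((0,∞))`. -/
def laplace (x : ℝ) : testFunctions →ₗ[ℂ] ℂ where
  toFun f := laplaceTransform f x
  map_add' f g := f.2.laplaceTransform_add g.2 x
  map_smul' c f := laplaceTransform_const_smul c f x

theorem laplace_aeval_derivative (P : Polynomial ℂ) (f : testFunctions) (x : ℝ) :
    laplace x (Polynomial.aeval derivative P f) = P.eval (x : ℂ) * laplace x f := by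
  have hderiv (g : testFunctions) : laplace x (derivative g) = x * laplace x g :=
    g.2.laplaceTransform_deriv x
  induction P using Polynomial.induction_on with
  | C c => simp
  | add P Q hP hQ => simp [hP, hQ, add_mul]
  | monomial n c ih =>
    rw [pow_succ', mul_left_comm, map_mul, Polynomial.aeval_X, Module.End.mul_apply, hderiv, ih,
      Polynomial.eval_mul (p := Polynomial.X), Polynomial.eval_X, mul_assoc]

end testFunctions

theorem exists_isTestFun_laplaceTransform_ne_zero :
    ∃ f, IsTestFun f ∧ ∀ x, laplaceTransform f x ≠ 0 := by
  let φ : ContDiffBump (2 : ℝ) := ⟨1 / 2, 1, by norm_num, by norm_num⟩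
  have htsupport : tsupport (fun t => (φ t : ℂ)) ⊆ tsupport φ :=
    closure_mono (Function.support_comp_subset (g := fun r : ℝ => (r : ℂ)) rfl φ)
  have hball : tsupport φ ⊆ Ioi 0 := by
    rw [φ.tsupport_eq, Real.closedBall_eq_Icc]
    exact fun t ht => lt_of_lt_of_le (by norm_num) ht.1
  have hφ : IsTestFun fun t => (φ t : ℂ) :=
    ⟨Complex.ofRealCLM.contDiff.comp φ.contDiff,
      φ.hasCompactSupport.comp_left (g := fun r : ℝ => (r : ℂ)) rfl, htsupport.trans hball⟩
  refine ⟨_, hφ, fun x => ?_⟩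
  have hpos : 0 < ∫ t, Real.exp (-(x * t)) * φ t := by
    refine Continuous.integral_pos_of_hasCompactSupport_nonneg_nonzero (x := 2)
      (by have := φ.continuous; fun_prop) φ.hasCompactSupport.mul_left
      (fun t => mul_nonneg (Real.exp_nonneg _) φ.nonneg) ?_
    rw [φ.one_of_mem_closedBall (Metric.mem_closedBall_self φ.rIn_pos.le)]
    positivity
  simp only [hφ.laplaceTransform_eq_integral, ← Complex.ofReal_mul, integral_complex_ofReal]
  exact_mod_cast hpos.ne'

/-! ### Concentration at a point -/

theorem mul_exp_neg_div_le {x₀ x y : ℝ} (hx₀ : 0 < x₀) (hy : 0 ≤ y)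
    (hxy : 0 ≤ (x - y) * (y - x₀)) :
    x * Real.exp (-(x / x₀)) ≤ y * Real.exp (-(y / x₀)) := by
  have hx : x ≤ y * ((x - y) / x₀ + 1) := by
    rw [← sub_nonneg]
    calc 0 ≤ (x - y) * (y - x₀) / x₀ := by positivity
      _ = y * ((x - y) / x₀ + 1) - x := by field_simp; ring
  calc x * Real.exp (-(x / x₀))
      ≤ y * Real.exp ((x - y) / x₀) * Real.exp (-(x / x₀)) := by
        gcongr
        exact hx.trans (by gcongr; exact Real.add_one_le_exp _)
    _ = y * Real.exp (-(y / x₀)) := by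
        rw [mul_assoc, ← Real.exp_add]
        ring_nf

theorem mul_exp_neg_div_lt {x₀ x : ℝ} (hx₀ : 0 < x₀) (hx : x ≠ x₀) :
    x * Real.exp (-(x / x₀)) < x₀ * Real.exp (-(x₀ / x₀)) := by
  have hlt : x < x₀ * Real.exp ((x - x₀) / x₀) := by
    have := Real.add_one_lt_exp (div_ne_zero (sub_ne_zero.2 hx) hx₀.ne')
    calc x = x₀ * ((x - x₀) / x₀ + 1) := by field_simp; ring
      _ < _ := by gcongr
  calc x * Real.exp (-(x / x₀))
      < x₀ * Real.exp ((x - x₀) / x₀) * Real.exp (-(x / x₀)) := by gcongr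
    _ = x₀ * Real.exp (-(x₀ / x₀)) := by
        rw [mul_assoc, ← Real.exp_add]
        ring_nf

theorem exists_mul_exp_neg_div_le_of_notMem {x₀ : ℝ} (hx₀ : 0 < x₀) {s : Set ℝ} (hs : s ∈ 𝓝 x₀) :
    ∃ α, 0 ≤ α ∧ α < x₀ * Real.exp (-(x₀ / x₀)) ∧ ∀ x ∉ s, x * Real.exp (-(x / x₀)) ≤ α := by
  obtain ⟨r, ⟨hr, hrx₀⟩, hrs⟩ : ∃ r ∈ Ioo 0 x₀, Icc (x₀ - r) (x₀ + r) ⊆ s := by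
    obtain ⟨ε, hε, hεs⟩ := Metric.nhds_basis_closedBall.mem_iff.1 hs
    refine ⟨min ε (x₀ / 2), ⟨by positivity, by linarith [min_le_right ε (x₀ / 2)]⟩, ?_⟩
    rw [← Real.closedBall_eq_Icc]
    exact (Metric.closedBall_subset_closedBall (min_le_left _ _)).trans hεs
  refine ⟨max ((x₀ - r) * Real.exp (-((x₀ - r) / x₀))) ((x₀ + r) * Real.exp (-((x₀ + r) / x₀))),
    le_max_of_le_right (by positivity), max_lt (mul_exp_neg_div_lt hx₀ (by linarith))
      (mul_exp_neg_div_lt hx₀ (by linarith)), fun x hx => ?_⟩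
  rcases lt_or_ge x (x₀ - r) with hlt | hge
  · exact le_max_of_le_left (mul_exp_neg_div_le hx₀ (by linarith) (by nlinarith))
  · have hgt : x₀ + r < x := not_le.1 fun hle => hx (hrs ⟨hge, hle⟩)
    exact le_max_of_le_right (mul_exp_neg_div_le hx₀ (by linarith) (by nlinarith))

theorem exists_norm_le_mul_norm_of_injective {𝕜 E F G : Type*} [NontriviallyNormedField 𝕜]
    [CompleteSpace 𝕜] [AddCommGroup E] [Module 𝕜 E] [FiniteDimensional 𝕜 E]
    [NormedAddCommGroup F] [NormedSpace 𝕜 F] [SeminormedAddCommGroup G] [NormedSpace 𝕜 G]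
    {A : E →ₗ[𝕜] F} (hA : Function.Injective A) (B : E →ₗ[𝕜] G) :
    ∃ K, ∀ e, ‖B e‖ ≤ K * ‖A e‖ := by
  let C := (B ∘ₗ (LinearEquiv.ofInjective A hA).symm.toLinearMap).toContinuousLinearMap
  refine ⟨‖C‖, fun e => ?_⟩
  simpa [C] using C.le_opNorm (LinearEquiv.ofInjective A hA e)

theorem exists_integral_norm_sq_le {𝕜 E F X : Type*} [RCLike 𝕜] [AddCommGroup E] [Module 𝕜 E]
    [FiniteDimensional 𝕜 E] [NormedAddCommGroup F] [NormedSpace 𝕜 F] [MeasurableSpace X]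
    {μ ν : Measure X} (u : E →ₗ[𝕜] X → F) (hμ : ∀ e, MemLp (u e) 2 μ) (hν : ∀ e, MemLp (u e) 2 ν)
    (hu : ∀ e, u e =ᵐ[ν] 0 → e = 0) :
    ∃ K, ∀ e, ∫ x, ‖u e x‖ ^ 2 ∂μ ≤ K * ∫ x, ‖u e x‖ ^ 2 ∂ν := by
  let toL2 (ρ : Measure X) (hρ : ∀ e, MemLp (u e) 2 ρ) : E →ₗ[𝕜] Lp F 2 ρ :=
    { toFun e := (hρ e).toLp
      map_add' e e' := by simp only [map_add]; exact MemLp.toLp_add _ _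
      map_smul' c e := by simp only [map_smul]; exact MemLp.toLp_const_smul _ _ }
  have hnorm (ρ : Measure X) (hρ : ∀ e, MemLp (u e) 2 ρ) (e : E) :
      ∫ x, ‖u e x‖ ^ 2 ∂ρ = ‖toL2 ρ hρ e‖ ^ 2 := by
    simp only [toL2, LinearMap.coe_mk, AddHom.coe_mk, Lp.norm_toLp,
      (hρ e).eLpNorm_eq_integral_rpow_norm two_ne_zero ENNReal.ofNat_ne_top]
    rw [ENNReal.toReal_ofReal (by positivity), ← Real.rpow_mul_natCast (by positivity)]
    norm_num
  have hinj : Function.Injective (toL2 ν hν) := by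
    refine (injective_iff_map_eq_zero _).2 fun e he => hu e ?_
    exact (MemLp.toLp_eq_toLp_iff (hν e) MemLp.zero).1 he
  obtain ⟨K, hK⟩ := exists_norm_le_mul_norm_of_injective hinj (toL2 μ hμ)
  refine ⟨K ^ 2, fun e => ?_⟩
  rw [hnorm μ hμ, hnorm ν hν, ← mul_pow]
  exact pow_le_pow_left₀ (norm_nonneg _) (hK e) 2

section Concentration

variable {X : Type*} {G g : X → ℝ} {α β : ℝ}

theorem mul_pow_mul_sq_le_sub_indicator (hα : 0 ≤ α) (hαβ : α < β) (w : X → ℝ) (n : ℕ) {x : X}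
    (hg : 0 ≤ g x) (hG : α < g x → G x < 0) :
    G x * (g x ^ n * w x) ^ 2 ≤ (α ^ n) ^ 2 * (|G x| * w x ^ 2) -
      (β ^ n) ^ 2 * {x | β < g x}.indicator (fun x => |G x| * w x ^ 2) x := by
  have hnonneg : 0 ≤ |G x| * w x ^ 2 := by positivity
  have hnonneg_α := mul_nonneg (sq_nonneg (α ^ n)) hnonneg
  rw [mul_pow, mul_left_comm]
  by_cases hα' : α < g x
  · have hneg : G x * w x ^ 2 = -(|G x| * w x ^ 2) := by rw [abs_of_neg (hG hα')]; ring
    by_cases hβ : x ∈ {x | β < g x}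
    · have hpow : (β ^ n) ^ 2 ≤ (g x ^ n) ^ 2 := by
        have hβ₀ : 0 ≤ β := hα.trans hαβ.le
        gcongr
        exact le_of_lt hβ
      rw [indicator_of_mem hβ, hneg]
      linarith [mul_le_mul_of_nonneg_right hpow hnonneg]
    · rw [indicator_of_notMem hβ, hneg]
      linarith [mul_nonneg (sq_nonneg (g x ^ n)) hnonneg]
  · have hβ : x ∉ {x | β < g x} := fun hβ => hα' (hαβ.trans hβ)
    rw [indicator_of_notMem hβ, mul_zero, sub_zero]
    calc (g x ^ n) ^ 2 * (G x * w x ^ 2) ≤ (g x ^ n) ^ 2 * (|G x| * w x ^ 2) := by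
          gcongr
          exact le_abs_self _
      _ ≤ (α ^ n) ^ 2 * (|G x| * w x ^ 2) := by
          gcongr
          exact not_lt.1 hα'

variable [MeasurableSpace X] {μ : Measure X}

theorem integral_mul_pow_mul_sq_neg (hα : 0 ≤ α) (hαβ : α < β) (hg : Measurable g)
    (hg_nonneg : 0 ≤ᵐ[μ] g) (hG : ∀ᵐ x ∂μ, α < g x → G x < 0) {w : X → ℝ} {n : ℕ}
    (hint : Integrable (fun x => G x * w x ^ 2) μ)
    (hint_pow : Integrable (fun x => G x * (g x ^ n * w x) ^ 2) μ) {K : ℝ}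
    (hK : (α ^ n) ^ 2 * K < (β ^ n) ^ 2)
    (hle : ∫ x, |G x| * w x ^ 2 ∂μ ≤ K * ∫ x in {x | β < g x}, |G x| * w x ^ 2 ∂μ)
    (hpos : 0 < ∫ x in {x | β < g x}, |G x| * w x ^ 2 ∂μ) :
    ∫ x, G x * (g x ^ n * w x) ^ 2 ∂μ < 0 := by
  have hs : MeasurableSet {x | β < g x} := measurableSet_lt measurable_const hg
  have hint_abs : Integrable (fun x => |G x| * w x ^ 2) μ :=
    hint.abs.congr (ae_of_all _ fun x => by simp only [abs_mul, abs_sq])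
  calc ∫ x, G x * (g x ^ n * w x) ^ 2 ∂μ
      ≤ ∫ x, (α ^ n) ^ 2 * (|G x| * w x ^ 2) -
          (β ^ n) ^ 2 * {x | β < g x}.indicator (fun x => |G x| * w x ^ 2) x ∂μ := by
        refine integral_mono_ae hint_pow
          ((hint_abs.const_mul _).sub ((hint_abs.indicator hs).const_mul _)) ?_
        filter_upwards [hg_nonneg, hG] with x hgx hGx
        exact mul_pow_mul_sq_le_sub_indicator hα hαβ w n hgx hGx
    _ = (α ^ n) ^ 2 * ∫ x, |G x| * w x ^ 2 ∂μ -
          (β ^ n) ^ 2 * ∫ x in {x | β < g x}, |G x| * w x ^ 2 ∂μ := by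
        rw [integral_sub (hint_abs.const_mul _) ((hint_abs.indicator hs).const_mul _),
          integral_const_mul, integral_const_mul, integral_indicator hs]
    _ ≤ ((α ^ n) ^ 2 * K - (β ^ n) ^ 2) * ∫ x in {x | β < g x}, |G x| * w x ^ 2 ∂μ := by
        nlinarith [mul_le_mul_of_nonneg_left hle (sq_nonneg (α ^ n))]
    _ < 0 := mul_neg_of_neg_of_pos (sub_neg.2 hK) hpos

theorem exists_pow_sq_mul_lt_pow_sq (hα : 0 ≤ α) (hαβ : α < β) (K : ℝ) :
    ∃ n : ℕ, (α ^ n) ^ 2 * K < (β ^ n) ^ 2 := by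
  have hβ : 0 < β := hα.trans_lt hαβ
  have hlt : (α / β) ^ 2 < 1 := pow_lt_one₀ (by positivity) ((div_lt_one hβ).2 hαβ) two_ne_zero
  obtain ⟨n, hn⟩ := exists_pow_lt_of_lt_one (inv_pos.2 (by positivity : 0 < |K| + 1)) hlt
  rw [← pow_mul, mul_comm 2, pow_mul, div_pow, div_pow, inv_eq_one_div,
    div_lt_div_iff₀ (by positivity) (by positivity), one_mul] at hn
  refine ⟨n, lt_of_le_of_lt ?_ hn⟩
  gcongr
  linarith [le_abs_self K]

theorem exists_forall_integral_mul_pow_neg {𝕜 E F : Type*} [RCLike 𝕜] [AddCommGroup E]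
    [Module 𝕜 E] [FiniteDimensional 𝕜 E] [NormedAddCommGroup F] [NormedSpace 𝕜 F]
    (u : E →ₗ[𝕜] X → F) (hα : 0 ≤ α) (hαβ : α < β) (hg : Measurable g)
    (hg_nonneg : 0 ≤ᵐ[μ] g) (hG_meas : AEStronglyMeasurable G μ)
    (hG : ∀ᵐ x ∂μ, α < g x → G x < 0) (hu_meas : ∀ e, AEStronglyMeasurable (u e) μ)
    (hint : ∀ n e, Integrable (fun x => G x * (g x ^ n * ‖u e x‖) ^ 2) μ)
    (hu : ∀ e, (∀ᵐ x ∂μ, β < g x → u e x = 0) → e = 0) :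
    ∃ n : ℕ, ∀ e ≠ 0, ∫ x, G x * (g x ^ n * ‖u e x‖) ^ 2 ∂μ < 0 := by
  have hs : MeasurableSet {x | β < g x} := measurableSet_lt measurable_const hg
  let v : E →ₗ[𝕜] X → F :=
    LinearMap.pi fun x => ((√|G x| : ℝ) : 𝕜) • (LinearMap.proj x ∘ₗ u)
  have hv_sq (e : E) (x : X) : ‖v e x‖ ^ 2 = |G x| * ‖u e x‖ ^ 2 := by
    simp [v, norm_smul, mul_pow]
  have hint₀ (e : E) : Integrable (fun x => G x * ‖u e x‖ ^ 2) μ := by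
    simpa using hint 0 e
  have hv (e : E) : MemLp (v e) 2 μ := by
    refine (memLp_two_iff_integrable_sq_norm ?_).2 ?_
    · have hsqrt : AEStronglyMeasurable (fun x => ((√|G x| : ℝ) : 𝕜)) μ :=
        RCLike.continuous_ofReal.comp_aestronglyMeasurable
          (Real.continuous_sqrt.comp_aestronglyMeasurable hG_meas.norm)
      exact hsqrt.smul (hu_meas e)
    · exact (hint₀ e).abs.congr (ae_of_all _ fun x => by simp only [hv_sq, abs_mul, abs_sq])
  have hv_inj (e : E) (he : v e =ᵐ[μ.restrict {x | β < g x}] 0) : e = 0 := by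
    refine hu e ?_
    filter_upwards [(ae_restrict_iff' hs).1 he, hG] with x hvx hGx hβ
    have := hv_sq e x
    simpa [hvx hβ, (hGx (hαβ.trans hβ)).ne] using this
  obtain ⟨K, hK⟩ := exists_integral_norm_sq_le v hv (fun e => (hv e).restrict _) hv_inj
  obtain ⟨n, hn⟩ := exists_pow_sq_mul_lt_pow_sq hα hαβ K
  refine ⟨n, fun e he => integral_mul_pow_mul_sq_neg hα hαβ hg hg_nonneg hG (hint₀ e)
    (hint n e) hn (by simpa only [hv_sq] using hK e) ?_⟩
  simp only [← hv_sq]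
  refine (integral_nonneg fun x => by positivity).lt_of_ne' fun h => he (hv_inj e ?_)
  have hint_v := (memLp_two_iff_integrable_sq_norm ((hv e).restrict {x | β < g x}).1).1
    ((hv e).restrict _)
  filter_upwards [(integral_eq_zero_iff_of_nonneg (fun x => by positivity) hint_v).1 h] with x hx
  simpa using hx

end Concentration

/-! ### Negative subspaces of Hankel forms -/

theorem negSubspace_finrank {E : Type*} [AddCommGroup E] [Module ℂ E] {Q : (ℝ → ℂ) → ℂ}
    (Φ : E →ₗ[ℂ] ℝ → ℂ) (hΦ : ∀ e, IsTestFun (Φ e)) (hQ₀ : Q 0 = 0)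
    (hQ : ∀ e ≠ 0, Q (Φ e) < 0) : negSubspace Q (Module.finrank ℂ E) := by
  have hinj : Function.Injective Φ := (injective_iff_map_eq_zero _).2 fun e he => by
    by_contra hne
    exact (hQ e hne).ne (by rw [he, hQ₀])
  refine ⟨Φ.range, ?_, LinearMap.finrank_range_of_inj hinj, ?_⟩
  · rintro _ ⟨e, rfl⟩
    exact hΦ e
  · rintro _ ⟨e, rfl⟩ hne
    exact hQ e fun he => hne (by rw [he, map_zero])

theorem polynomial_eq_zero_of_ae_eval_eq_zero {𝕜 : Type*} [RCLike 𝕜] {μ : Measure ℝ}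
    [NullSingletonClass μ] (hμ : μ ≠ 0) {P : Polynomial 𝕜}
    (hP : ∀ᵐ x : ℝ ∂μ, P.eval (x : 𝕜) = 0) : P = 0 := by
  by_contra hP₀
  have hroots : {x : ℝ | P.eval (x : 𝕜) = 0}.Finite :=
    (Polynomial.finite_setOfPred_isRoot hP₀).preimage RCLike.ofReal_injective.injOn
  have hfalse : ∀ᵐ _ ∂μ, False := by
    filter_upwards [hP, hroots.countable.ae_notMem μ] with x hx hx'
    exact hx' hx
  exact hμ (ae_eq_bot.1 (eventually_false_iff_eq_bot.1 hfalse))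

theorem exists_linearMap_norm_laplaceTransform_eq {f : ℝ → ℂ} (hf : IsTestFun f) {a : ℝ}
    (ha : 0 ≤ a) (n : ℕ) : ∃ Φ : Polynomial ℂ →ₗ[ℂ] ℝ → ℂ, ∀ P, IsTestFun (Φ P) ∧ ∀ x ≥ 0,
      ‖laplaceTransform (Φ P) x‖ =
        (x * Real.exp (-(x * a))) ^ n * ‖P.eval (x : ℂ) * laplaceTransform f x‖ := by
  let Ψ (P : Polynomial ℂ) : testFunctions :=
    Polynomial.aeval testFunctions.derivative (Polynomial.X ^ n * P) ⟨f, hf⟩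
  refine ⟨⟨⟨fun P t => (Ψ P : ℝ → ℂ) (t - n * a), fun P Q => ?_⟩, fun c P => ?_⟩, fun P =>
    ⟨(Ψ P).2.comp_sub_right (by positivity), fun x hx => ?_⟩⟩
  · simp only [Ψ, mul_add, map_add]
    rfl
  · simp only [Ψ, mul_smul_comm, map_smul]
    rfl
  · have hΨ : laplaceTransform (Ψ P) x = x ^ n * P.eval (x : ℂ) * laplaceTransform f x := by
      refine (testFunctions.laplace_aeval_derivative (Polynomial.X ^ n * P) ⟨f, hf⟩ x).trans ?_
      rw [Polynomial.eval_mul, Polynomial.eval_pow, Polynomial.eval_X]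
      rfl
    have hΦ := (Ψ P).2.laplaceTransform_comp_sub_right (by positivity : 0 ≤ n * a) x
    rw [LinearMap.coe_mk, AddHom.coe_mk, hΦ, hΨ, show -(x * (n * a)) = n * -(x * a) by ring,
      Real.exp_nat_mul]
    simp only [norm_mul, norm_pow, Complex.norm_real, Real.norm_of_nonneg hx, Real.norm_eq_abs,
      Real.abs_exp]
    ring

theorem finrank_degreeLT (R : Type*) [CommRing R] [StrongRankCondition R] (N : ℕ) :
    Module.finrank R (Polynomial.degreeLT R N) = N := by
  rw [(Polynomial.degreeLTEquiv R N).finrank_eq, Module.finrank_fin_fun]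

namespace HasLaplaceDensity

variable {h σ : ℝ → ℝ} {x₀ : ℝ}

theorem exists_forall_setIntegral_neg (hσ : HasLaplaceDensity h σ) (hx₀ : 0 < x₀)
    (hneg : ∀ᶠ x in 𝓝 x₀, σ x < 0) {f : ℝ → ℂ} (hf : IsTestFun f)
    (hf₀ : ∀ x, laplaceTransform f x ≠ 0) (N : ℕ) :
    ∃ n : ℕ, ∀ P ∈ Polynomial.degreeLT ℂ N, P ≠ 0 →
      ∫ x in Ioi 0, σ x * ((x * Real.exp (-(x * x₀⁻¹))) ^ n *
        ‖P.eval (x : ℂ) * laplaceTransform f x‖) ^ 2 < 0 := by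
  simp only [← div_eq_mul_inv]
  obtain ⟨α, hα, hα_lt, hα_le⟩ := exists_mul_exp_neg_div_le_of_notMem hx₀ hneg
  obtain ⟨β, hαβ, hβ⟩ := exists_between hα_lt
  have hcont : Continuous fun x => x * Real.exp (-(x / x₀)) := by fun_prop
  let u : Polynomial.degreeLT ℂ N →ₗ[ℂ] ℝ → ℂ := LinearMap.pi fun x =>
    LinearMap.mulRight ℂ (laplaceTransform f x) ∘ₗ Polynomial.leval (x : ℂ) ∘ₗ Submodule.subtype _
  have hu_meas (P) : AEStronglyMeasurable (u P) (volume.restrict (Ioi 0)) := by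
    have hpoly : Continuous fun x : ℝ => (P : Polynomial ℂ).eval (x : ℂ) := by fun_prop
    exact hpoly.aestronglyMeasurable.mul
      (stronglyMeasurable_laplaceTransform hf.stronglyMeasurable).aestronglyMeasurable
  have hint (n : ℕ) (P) :
      IntegrableOn (fun x => σ x * ((x * Real.exp (-(x / x₀))) ^ n * ‖u P x‖) ^ 2) (Ioi 0) := by
    obtain ⟨Φ, hΦ⟩ := exists_linearMap_norm_laplaceTransform_eq hf (inv_nonneg.2 hx₀.le) n
    refine (hσ.integrableOn_mul_norm_sq_laplaceTransform (hΦ P).1).congr_fun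
      (fun x hx => ?_) measurableSet_Ioi
    simp only [(hΦ P).2 x (le_of_lt hx), ← div_eq_mul_inv]
    rfl
  have hu_inj (P) (hP : ∀ᵐ x ∂volume.restrict (Ioi 0),
      x ∈ {x | β < x * Real.exp (-(x / x₀))} → u P x = 0) : P = 0 := by
    have hs : IsOpen {x | β < x * Real.exp (-(x / x₀))} := isOpen_lt continuous_const hcont
    rw [← ae_restrict_iff' hs.measurableSet, Measure.restrict_restrict hs.measurableSet] at hP
    refine Subtype.ext (polynomial_eq_zero_of_ae_eval_eq_zero ?_
      (hP.mono fun x hx => (mul_eq_zero.1 hx).resolve_right (hf₀ x)))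
    exact Measure.restrict_eq_zero.not.2
      ((hs.inter isOpen_Ioi).measure_pos volume ⟨x₀, hβ, hx₀⟩).ne'
  obtain ⟨n, hn⟩ := exists_forall_integral_mul_pow_neg u hα hαβ hcont.measurable
    (ae_restrict_of_forall_mem measurableSet_Ioi fun x hx =>
      mul_nonneg (le_of_lt hx) (Real.exp_nonneg _))
    hσ.aestronglyMeasurable
    (ae_of_all _ fun x hx => by_contra fun hx' => hx.not_ge (hα_le x hx')) hu_meas hint hu_inj
  exact ⟨n, fun P hP hne => hn ⟨P, hP⟩ fun h => hne (congrArg Subtype.val h)⟩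

theorem negSubspace_hankelQF (hσ : HasLaplaceDensity h σ) (hx₀ : 0 < x₀)
    (hneg : ∀ᶠ x in 𝓝 x₀, σ x < 0) (N : ℕ) : negSubspace (hankelQF fun t => (h t : ℂ)) N := by
  obtain ⟨f, hf, hf₀⟩ := exists_isTestFun_laplaceTransform_ne_zero
  obtain ⟨n, hn⟩ := hσ.exists_forall_setIntegral_neg hx₀ hneg hf hf₀ N
  obtain ⟨Φ, hΦ⟩ := exists_linearMap_norm_laplaceTransform_eq hf (inv_nonneg.2 hx₀.le) n
  rw [← finrank_degreeLT ℂ N]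
  refine negSubspace_finrank (Φ ∘ₗ Submodule.subtype _) (fun P => (hΦ P).1) (by simp [hankelQF])
    fun P hP => ?_
  rw [LinearMap.comp_apply, Submodule.subtype_apply, hσ.hankelQF_eq_integral (hΦ P).1,
    setIntegral_congr_fun measurableSet_Ioi fun x hx => by rw [(hΦ P).2 x (le_of_lt hx)]]
  exact_mod_cast hn P P.2 (Subtype.coe_ne_coe.2 hP)

end HasLaplaceDensity

/-! ### The kernel `t⁻¹ - γ e^{-√t}` -/

theorem hasLaplaceDensity_inv : HasLaplaceDensity (fun t => t⁻¹) fun _ => 1 where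
  integrableOn t ht := by simpa using exp_neg_integrableOn_Ioi 0 ht
  eq_laplaceTransform t ht := by
    have := integral_exp_mul_Ioi (neg_neg_of_pos ht) 0
    simpa [laplaceTransform] using this.symm

theorem hasLaplaceDensity_exp_neg_sqrt :
    HasLaplaceDensity (fun t => Real.exp (-√t)) expSqrtDensity where
  integrableOn t ht := Integrable.of_integral_ne_zero <| by
    rw [integral_exp_neg_mul_expSqrtDensity ht]
    exact Real.exp_ne_zero _
  eq_laplaceTransform _ ht := (integral_exp_neg_mul_expSqrtDensity ht).symm

/-- For `h_γ(t) = t⁻¹ - γ e^{-√t}` and `ν = 3√(6/π) e^{-3/2}`: the Hankel form is positive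
when `γ ≤ ν⁻¹`, and has infinitely many negative squares when `γ > ν⁻¹`. -/
theorem carleman_perturbed_by_exp_sqrt (γ : ℝ) :
    ((γ ≤ (3 * Real.sqrt (6 / Real.pi) * Real.exp (-(3/2)))⁻¹) →
      ∀ f : ℝ → ℂ, IsTestFun f →
        0 ≤ hankelQF
          (fun t : ℝ => ((t⁻¹ - γ * Real.exp (-Real.sqrt t) : ℝ) : ℂ)) f)
    ∧ (((3 * Real.sqrt (6 / Real.pi) * Real.exp (-(3/2)))⁻¹ < γ) →
      ∀ N : ℕ, negSubspace (hankelQF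
        (fun t : ℝ => ((t⁻¹ - γ * Real.exp (-Real.sqrt t) : ℝ) : ℂ))) N) := by
  rw [← expSqrtDensity_one_sixth]
  have hpos : 0 < expSqrtDensity (1 / 6) := expSqrtDensity_pos (by norm_num)
  have hdensity := hasLaplaceDensity_inv.sub (hasLaplaceDensity_exp_neg_sqrt.const_mul γ)
  refine ⟨fun hγ f hf => hdensity.hankelQF_nonneg ?_ hf, fun hγ N =>
    hdensity.negSubspace_hankelQF (x₀ := 1 / 6) (by norm_num) ?_ N⟩
  · intro x hx
    refine sub_nonneg.2 ?_
    calc γ * expSqrtDensity x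
        ≤ (expSqrtDensity (1 / 6))⁻¹ * expSqrtDensity (1 / 6) := by
          gcongr
          exacts [(expSqrtDensity_pos hx).le, expSqrtDensity_le hx]
      _ = 1 := inv_mul_cancel₀ hpos.ne'
  · have hcont := (continuousAt_expSqrtDensity (x := 1 / 6) (by norm_num)).const_mul γ
    exact (hcont.eventually_const_lt ((inv_lt_iff_one_lt_mul₀ hpos).1 hγ)).mono fun x => sub_neg.2
end
end
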